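/- Let k be a field, d an even integer with d ≥ 2, and m an integer with d+1 < m; set a = (d+2)/2, R = k[x_1,…,x_m], and M = R/(I_{a,1,m−1} + I_{a,2,m}) (the Stanley–Reisner ring k[Δ(d,m)]). Then b_0(M) = 1, b_{m−d}(M) = 1, b_i(M) = 0 for i > m−d, and for every i with 1 ≤ i ≤ m−d−1, b_i(M) = η(d+1, m+1, i) + η(d+1, m+1, m−d−i), i.e. b_i(M) = C(m−d/2−1, d/2+i)·C(d/2+i−1, d/2) + C(m−d/2−1, m−d/2−i)·C(m−d/2−i−1, d/2). -/

import Mathlib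

/-- The variable `x_t` (1-indexed, for `1 ≤ t ≤ n`) of the polynomial ring
`k[x_1, …, x_n]`, realized as `MvPolynomial (Fin n) k`. -/
noncomputable def Xv (k : Type*) [Field k] (n t : ℕ) : MvPolynomial (Fin n) k :=
  if h : 1 ≤ t ∧ t ≤ n then MvPolynomial.X ⟨t - 1, by omega⟩ else 0

/-- The ideal `I_{a,p,q}` of `k[x_1, …, x_n]`, generated by the squarefree monomials
`x_{t_1} ⋯ x_{t_a}` with `p ≤ t_1 < t_2 < ⋯ < t_a ≤ q` and `t_{j+1} ≥ t_j + 2`. -/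
noncomputable def idealI (k : Type*) [Field k] (n a p q : ℕ) :
    Ideal (MvPolynomial (Fin n) k) :=
  Ideal.span { f | ∃ t : ℕ → ℕ, p ≤ t 0 ∧ t (a - 1) ≤ q ∧
    (∀ j, j + 1 < a → t j + 2 ≤ t (j + 1)) ∧
    f = ∏ j ∈ Finset.range a, Xv k n (t j) }

open CategoryTheory

set_option synthInstance.maxHeartbeats 1000000
set_option maxHeartbeats 1000000

/-- The maximal homogeneous ideal `(x_1, …, x_n)` of `k[x_1, …, x_n]`. -/
noncomputable def maxIdl (k : Type) [Field k] (n : ℕ) : Ideal (MvPolynomial (Fin n) k) :=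
  Ideal.span (Set.range MvPolynomial.X)

/-- The `i`-th (total) Betti number of a module `M` over `R = k[x_1, …, x_n]`, as a
cardinal: the dimension over `k` of `Tor_i^R(R/(x_1,…,x_n), M)`, where
`R/(x_1,…,x_n)` is `k` regarded as an `R`-module via evaluation of every variable at `0`. -/
noncomputable def betti (k : Type) [Field k] (n : ℕ)
    (M : ModuleCat (MvPolynomial (Fin n) k)) (i : ℕ) : Cardinal :=
  Module.rank k (RestrictScalars k (MvPolynomial (Fin n) k)
    (((Tor (ModuleCat (MvPolynomial (Fin n) k)) i).obj
        (ModuleCat.of (MvPolynomial (Fin n) k)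
          (MvPolynomial (Fin n) k ⧸ maxIdl k n))).obj M))

/-- `η(e,n,j) = C(n−⌊e/2⌋−2, ⌊e/2⌋+j)·C(⌊e/2⌋+j−1, ⌊e/2⌋)` for `1 ≤ j ≤ n−e−1`, and
`η(e,n,j) = 0` for `j = 0` or `j ≥ n−e`. -/
def eta (e n j : ℕ) : ℕ :=
  if 1 ≤ j ∧ j ≤ n - e - 1 then
    Nat.choose (n - e / 2 - 2) (e / 2 + j) * Nat.choose (e / 2 + j - 1) (e / 2)
  else 0

/-!
Write `d = 2b`, number the variables from `0`, and let `W_N` be the sum of the two ideals for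
`m = N + 1`. Then `W_{N+1} = P + x Q` with `x = x_{N+1}`, where `P` is generated by the products of
`b + 1` variables among `x_0, …, x_N`, and `Q` by those of `b` variables among `x_1, …, x_{N-1}`,
with pairwise nonadjacent indices. As `x` occurs in neither, `P ∩ x Q = x (P ∩ Q)`, and the
combinatorial heart of the proof is that `P ∩ Q = W_N`; the recursion starts from the principal
ideal `W_{2b} := (x_0 ⋯ x_{2b})`.

By the same kind of splitting `P` and `Q` have linear resolutions. The `j`-th step of a resolution
of `x (P ∩ Q)` lives in degrees larger than the only degree in the `j`-th step for `P ⊕ x Q`, so no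
unit can occur in the comparison map, and the mapping cone of `x (P ∩ Q) → P ⊕ x Q` is again a
minimal resolution: `β_{j+1}(W_{N+1}) = β_{j+1}(P) + β_{j+1}(Q) + β_j(W_N)`. A minimal resolution
has zero differentials modulo the maximal ideal, so these ranks are the dimensions of `Tor`.
-/

universe u

namespace GradedResolution

section Grading

variable {R : Type u} [CommRing R] {σ : Type*} [SetLike σ R] [AddSubmonoidClass σ R]
  (𝒜 : ℕ → σ) [GradedRing 𝒜]

/-- The projection of the twist `R(-d)` of the graded ring `R` onto its component of degree `j`. -/
def twistProj (d j : ℕ) : R →+ R :=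
  if d ≤ j then GradedRing.proj 𝒜 (j - d) else 0

theorem twistProj_of_lt {d j : ℕ} (h : j < d) : twistProj 𝒜 d j = 0 :=
  if_neg h.not_ge

theorem twistProj_self (d : ℕ) : twistProj 𝒜 d d = GradedRing.proj 𝒜 0 := by
  simp [twistProj]

theorem twistProj_self_one (d : ℕ) : twistProj 𝒜 d d 1 = 1 := by
  simp [twistProj_self, GradedRing.proj_apply, DirectSum.decompose_one, DirectSum.one_def]

theorem twistProj_zero (j : ℕ) : twistProj 𝒜 0 j = GradedRing.proj 𝒜 j := by
  simp [twistProj]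

theorem twistProj_add_right (d j s : ℕ) : twistProj 𝒜 (d + s) (j + s) = twistProj 𝒜 d j := by
  simp [twistProj, Nat.add_sub_add_right]

theorem twistProj_eq_zero_of_mem_irrelevant {d j : ℕ} {r : R}
    (hr : r ∈ HomogeneousIdeal.irrelevant 𝒜) (h : j ≤ d) : twistProj 𝒜 d j r = 0 := by
  obtain rfl | h := h.eq_or_lt
  · rwa [twistProj_self, ← HomogeneousIdeal.mem_irrelevant_iff]
  · simp [twistProj_of_lt 𝒜 h]

theorem twistProj_mul_of_mem {d j i : ℕ} (r : R) {x : R} (hx : x ∈ 𝒜 i) :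
    twistProj 𝒜 d j (r * x) = twistProj 𝒜 (d + i) j r * x := by
  obtain h | h := lt_or_ge j d
  · simp [twistProj_of_lt 𝒜 h, twistProj_of_lt 𝒜 (show j < d + i by omega)]
  simp only [twistProj, if_pos h, GradedRing.proj_apply]
  split_ifs with hi
  · rw [DirectSum.coe_decompose_mul_of_right_mem_of_le 𝒜 hx (by omega),
      GradedRing.proj_apply, Nat.sub_sub]
  · rw [DirectSum.coe_decompose_mul_of_right_mem_of_not_le 𝒜 hx (by omega),
      AddMonoidHom.zero_apply, zero_mul]

theorem twistProj_mul_twistProj (d j q : ℕ) (r x : R) :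
    twistProj 𝒜 d j (r * twistProj 𝒜 d q x) = twistProj 𝒜 q j r * twistProj 𝒜 d q x := by
  obtain h | h := lt_or_ge q d
  · simp [twistProj_of_lt 𝒜 h]
  · have hx : twistProj 𝒜 d q x ∈ 𝒜 (q - d) := by
      simp [twistProj, if_pos h, GradedRing.proj_apply]
    rw [twistProj_mul_of_mem 𝒜 r hx, Nat.add_sub_cancel' h]

/-- A grading of an `R`-module, encoded by its projections onto the homogeneous components, so that
submodules, products and kernels inherit it componentwise. That every element is the sum of its
components is not part of the data. -/
structure ModuleGrading (M : Type*) [AddCommGroup M] [Module R M] where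
  component : ℕ → M →+ M
  component_smul_component (j q : ℕ) (r : R) (x : M) :
    component j (r • component q x) = twistProj 𝒜 q j r • component q x

namespace ModuleGrading

variable {𝒜} {M N : Type*} [AddCommGroup M] [Module R M] [AddCommGroup N] [Module R N]

theorem component_component (G : ModuleGrading 𝒜 M) (j : ℕ) (x : M) :
    G.component j (G.component j x) = G.component j x := by
  simpa [twistProj_self_one] using G.component_smul_component j j 1 x

theorem component_smul (G : ModuleGrading 𝒜 M) {q : ℕ} {x : M} (hx : G.component q x = x)
    (j : ℕ) (r : R) : G.component j (r • x) = twistProj 𝒜 q j r • x := by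
  simpa [hx] using G.component_smul_component j q r x

variable (𝒜) in
/-- The grading of the free module `⨁ᵢ R(-deg i)`. -/
@[simps]
def free {ι : Type*} (deg : ι → ℕ) : ModuleGrading 𝒜 (ι → R) where
  component j := AddMonoidHom.pi fun i => (twistProj 𝒜 (deg i) j).comp (Pi.evalAddMonoidHom _ i)
  component_smul_component j q r x := funext fun i =>
    twistProj_mul_twistProj 𝒜 (deg i) j q r (x i)

variable (𝒜) in
/-- The grading of the ring as a module over itself. -/
@[simps]
def self : ModuleGrading 𝒜 R where
  component := GradedRing.proj 𝒜
  component_smul_component j q r x := by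
    simpa [twistProj_zero] using twistProj_mul_twistProj 𝒜 0 j q r x

/-- A submodule is stable under a grading if it contains the homogeneous components of its
elements. -/
def IsStable (G : ModuleGrading 𝒜 M) (N : Submodule R M) : Prop :=
  ∀ j, ∀ x ∈ N, G.component j x ∈ N

theorem IsStable.inf {G : ModuleGrading 𝒜 M} {N₁ N₂ : Submodule R M} (h₁ : G.IsStable N₁)
    (h₂ : G.IsStable N₂) : G.IsStable (N₁ ⊓ N₂) :=
  fun j x hx => ⟨h₁ j x hx.1, h₂ j x hx.2⟩

theorem IsStable.sup {G : ModuleGrading 𝒜 M} {N₁ N₂ : Submodule R M} (h₁ : G.IsStable N₁)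
    (h₂ : G.IsStable N₂) : G.IsStable (N₁ ⊔ N₂) := fun j x hx => by
  obtain ⟨y, hy, z, hz, rfl⟩ := Submodule.mem_sup.mp hx
  rw [map_add]
  exact Submodule.add_mem_sup (h₁ j y hy) (h₂ j z hz)

/-- The grading inherited by a stable submodule. -/
def restrict (G : ModuleGrading 𝒜 M) (N : Submodule R M) (hN : G.IsStable N) :
    ModuleGrading 𝒜 N where
  component j := ((G.component j).comp N.subtype.toAddMonoidHom).codRestrict N fun x => hN j x x.2
  component_smul_component j q r x := Subtype.ext (G.component_smul_component j q r x)

@[simp]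
theorem coe_restrict_component (G : ModuleGrading 𝒜 M) {N : Submodule R M} (hN : G.IsStable N)
    (j : ℕ) (x : N) : ((G.restrict N hN).component j x : M) = G.component j x := rfl

/-- The componentwise grading of a product. -/
@[simps]
def prod (G : ModuleGrading 𝒜 M) (H : ModuleGrading 𝒜 N) : ModuleGrading 𝒜 (M × N) where
  component j := (G.component j).prodMap (H.component j)
  component_smul_component j q r x := Prod.ext
    (G.component_smul_component j q r x.1) (H.component_smul_component j q r x.2)

theorem component_linearCombination (G : ModuleGrading 𝒜 M) {ι : Type*} [Fintype ι] {e : ι → M}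
    {deg : ι → ℕ} (he : ∀ i, G.component (deg i) (e i) = e i) (j : ℕ) (r : ι → R) :
    G.component j (Fintype.linearCombination R e r) =
      Fintype.linearCombination R e ((free 𝒜 deg).component j r) := by
  simp [Fintype.linearCombination_apply, map_sum, G.component_smul (he _)]

end ModuleGrading

end Grading

section Resolution

variable {R : Type u} [CommRing R] {σ : Type*} [SetLike σ R] [AddSubmonoidClass σ R]
  {𝒜 : ℕ → σ} [GradedRing 𝒜]

section Generators

variable {M N : Type*} [AddCommGroup M] [Module R M] [AddCommGroup N] [Module R N]

/-- A finite minimal system of homogeneous generators of a graded module: every relation among the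
generators has its coefficients in the irrelevant ideal. -/
structure MinimalGenerators (G : ModuleGrading 𝒜 M) (ι : Type*) [Fintype ι] where
  gen : ι → M
  deg : ι → ℕ
  component_gen (i : ι) : G.component (deg i) (gen i) = gen i
  surjective : Function.Surjective (Fintype.linearCombination R gen)
  minimal (r : ι → R) : Fintype.linearCombination R gen r = 0 →
    ∀ i, r i ∈ HomogeneousIdeal.irrelevant 𝒜

namespace MinimalGenerators

variable {G : ModuleGrading 𝒜 M} {ι : Type*} [Fintype ι] (E : MinimalGenerators G ι)

/-- The surjection onto a module given by a system of generators. -/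
abbrev cover : (ι → R) →ₗ[R] M := Fintype.linearCombination R E.gen

theorem component_cover (j : ℕ) (r : ι → R) :
    G.component j (E.cover r) = E.cover ((ModuleGrading.free 𝒜 E.deg).component j r) :=
  G.component_linearCombination E.component_gen j r

/-- The grading of the first syzygy module. -/
def syzygyGrading : ModuleGrading 𝒜 (LinearMap.ker E.cover) :=
  (ModuleGrading.free 𝒜 E.deg).restrict _ fun j r hr => by
    rw [LinearMap.mem_ker] at hr ⊢
    rw [← E.component_cover, hr, map_zero]

@[simp]
theorem coe_syzygyGrading_component (j : ℕ) (r : LinearMap.ker E.cover) (i : ι) :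
    (E.syzygyGrading.component j r : ι → R) i = twistProj 𝒜 (E.deg i) j (r.1 i) := rfl

theorem mem_irrelevant_of_component_cover_eq_zero {r : ι → R} {i : ι}
    (h : G.component (E.deg i) (E.cover r) = 0) : r i ∈ HomogeneousIdeal.irrelevant 𝒜 := by
  rw [E.component_cover] at h
  have h₀ := E.minimal _ h i
  simpa [HomogeneousIdeal.mem_irrelevant_iff, twistProj_self, GradedRing.proj_apply] using h₀

theorem component_eq_zero_of_lt {j : ℕ} (h : ∀ i, j < E.deg i) (x : M) : G.component j x = 0 := by
  obtain ⟨r, rfl⟩ := E.surjective x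
  rw [E.component_cover, ← map_zero E.cover]
  congr 1
  funext i
  simp [twistProj_of_lt 𝒜 (h i)]

/-- The images of generators under an isomorphism that raises degrees by `s`. -/
@[simps]
def map {H : ModuleGrading 𝒜 N} (f : M ≃ₗ[R] N) (s : ℕ)
    (hf : ∀ j x, f (G.component j x) = H.component (j + s) (f x)) : MinimalGenerators H ι where
  gen i := f (E.gen i)
  deg i := E.deg i + s
  component_gen i := by rw [← hf, E.component_gen]
  surjective x := by
    obtain ⟨r, hr⟩ := E.surjective (f.symm x)
    refine ⟨r, ?_⟩
    rw [← f.apply_symm_apply x, ← hr]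
    simp [Fintype.linearCombination_apply]
  minimal r hr := E.minimal r <| f.injective <| by
    simpa [Fintype.linearCombination_apply] using hr

theorem ker_cover_map {H : ModuleGrading 𝒜 N} (f : M ≃ₗ[R] N) (s : ℕ)
    (hf : ∀ j x, f (G.component j x) = H.component (j + s) (f x)) :
    LinearMap.ker E.cover = LinearMap.ker (E.map f s hf).cover := by
  ext r
  rw [LinearMap.mem_ker, LinearMap.mem_ker, ← f.map_eq_zero_iff]
  simp [Fintype.linearCombination_apply]

end MinimalGenerators

end Generators

/-- `HasMinimalResolution n D β G`: the module graded by `G` has a minimal graded free resolution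
of length less than `n`, with `β i` generators in step `i`, all of degree in `D i`. It is defined
by iterating the choice of minimal generators of the syzygies. -/
def HasMinimalResolution : (n : ℕ) → (D : ℕ → Set ℕ) → (β : ℕ → ℕ) →
    {M : Type u} → [AddCommGroup M] → [Module R M] → ModuleGrading 𝒜 M → Prop
  | 0, _, β, M, _, _, _ => Subsingleton M ∧ ∀ i, β i = 0
  | n + 1, D, β, _, _, _, G =>
    ∃ (ι : Type) (_ : Fintype ι) (E : MinimalGenerators G ι), Fintype.card ι = β 0 ∧
      (∀ i, E.deg i ∈ D 0) ∧
      HasMinimalResolution n (fun i => D (i + 1)) (fun i => β (i + 1)) E.syzygyGrading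

namespace HasMinimalResolution

variable {n : ℕ} {D : ℕ → Set ℕ} {β : ℕ → ℕ}
  {M : Type u} [AddCommGroup M] [Module R M] {G : ModuleGrading 𝒜 M}

theorem of_equiv {D' : ℕ → Set ℕ} {N : Type u} [AddCommGroup N] [Module R N]
    {H : ModuleGrading 𝒜 N} (h : HasMinimalResolution n D β G) (f : M ≃ₗ[R] N) {s : ℕ}
    (hf : ∀ j x, f (G.component j x) = H.component (j + s) (f x))
    (hD : ∀ i, ∀ d ∈ D i, d + s ∈ D' i) : HasMinimalResolution n D' β H := by
  induction n generalizing D D' β M N with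
  | zero =>
    have := h.1
    exact ⟨f.symm.injective.subsingleton, h.2⟩
  | succ n ih =>
    obtain ⟨ι, _, E, hcard, hdeg, hsyz⟩ := h
    refine ⟨ι, inferInstance, E.map f s hf, hcard, fun i => hD 0 _ (hdeg i),
      ih hsyz (LinearEquiv.ofEq _ _ (E.ker_cover_map f s hf)) (fun j x => ?_) fun i => hD (i + 1)⟩
    ext i
    simp [twistProj_add_right]

theorem weaken {D' : ℕ → Set ℕ} (h : HasMinimalResolution n D β G) (hD : ∀ i, D i ⊆ D' i) :
    HasMinimalResolution n D' β G :=
  h.of_equiv (s := 0) (LinearEquiv.refl R M) (fun _ _ => rfl) hD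

theorem of_subsingleton [Subsingleton M] : HasMinimalResolution n D 0 G := by
  induction n generalizing D M with
  | zero => exact ⟨‹_›, fun _ => rfl⟩
  | succ n ih =>
    let E : MinimalGenerators G Empty :=
      { gen := Empty.elim
        deg := Empty.elim
        component_gen := fun i => i.elim
        surjective := fun _ => ⟨0, Subsingleton.elim _ _⟩
        minimal := fun _ _ i => i.elim }
    exact ⟨Empty, inferInstance, E, rfl, fun i => i.elim, ih⟩

theorem mono {n' : ℕ} (h : HasMinimalResolution n D β G) (hn : n ≤ n') :
    HasMinimalResolution n' D β G := by
  induction n generalizing n' D β M with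
  | zero =>
    have := h.1
    obtain rfl : β = 0 := funext h.2
    exact of_subsingleton
  | succ n ih =>
    obtain _ | n' := n'
    · simp at hn
    obtain ⟨ι, _, E, hcard, hdeg, hsyz⟩ := h
    exact ⟨ι, inferInstance, E, hcard, hdeg, ih hsyz (Nat.le_of_succ_le_succ hn)⟩

theorem component_eq_zero (h : HasMinimalResolution n D β G) {j : ℕ} (hj : ∀ d ∈ D 0, j < d)
    (x : M) : G.component j x = 0 := by
  cases n with
  | zero =>
    have := h.1
    exact Subsingleton.elim _ _
  | succ n =>
    obtain ⟨ι, _, E, -, hdeg, -⟩ := h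
    exact E.component_eq_zero_of_lt (fun i => hj _ (hdeg i)) x

end HasMinimalResolution

end Resolution

section ShortExact

variable {R : Type u} [CommRing R] {σ : Type*} [SetLike σ R] [AddSubmonoidClass σ R]
  {𝒜 : ℕ → σ} [GradedRing 𝒜]

section

variable {A B C : Type*} [AddCommGroup A] [Module R A] [AddCommGroup B] [Module R B]
  [AddCommGroup C] [Module R C] {GA : ModuleGrading 𝒜 A} {GB : ModuleGrading 𝒜 B}
  {GC : ModuleGrading 𝒜 C}

/-- A short exact sequence `0 → A → B → C → 0` of graded modules and degree-preserving maps. -/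
structure GradedShortExact (GA : ModuleGrading 𝒜 A) (GB : ModuleGrading 𝒜 B)
    (GC : ModuleGrading 𝒜 C) (f : A →ₗ[R] B) (g : B →ₗ[R] C) : Prop where
  map_left (j : ℕ) (x : A) : f (GA.component j x) = GB.component j (f x)
  map_right (j : ℕ) (x : B) : g (GB.component j x) = GC.component j (g x)
  injective : Function.Injective f
  surjective : Function.Surjective g
  exact : Function.Exact f g

namespace GradedShortExact

variable {f : A →ₗ[R] B} {g : B →ₗ[R] C}

theorem exists_homogeneous_lift (S : GradedShortExact GA GB GC f g) {q : ℕ} {z : C}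
    (hz : GC.component q z = z) : ∃ y, g y = z ∧ GB.component q y = y := by
  obtain ⟨y, rfl⟩ := S.surjective z
  exact ⟨GB.component q y, by rw [S.map_right, hz], GB.component_component q y⟩

theorem component_left_eq_zero (S : GradedShortExact GA GB GC f g) {j : ℕ} {x : A}
    (h : GB.component j (f x) = 0) : GA.component j x = 0 :=
  S.injective <| by rw [S.map_left, h, map_zero]

theorem apply_apply_eq_zero (S : GradedShortExact GA GB GC f g) (x : A) : g (f x) = 0 :=
  (S.exact _).mpr ⟨x, rfl⟩

theorem exists_eq_add_of_apply_eq (S : GradedShortExact GA GB GC f g) {y y' : B}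
    (h : g y = g y') : ∃ x, y = f x + y' := by
  obtain ⟨x, hx⟩ := (S.exact (y - y')).mp (by rw [map_sub, h, sub_self])
  exact ⟨x, by rw [hx, sub_add_cancel]⟩

end GradedShortExact

end

section Horseshoe

variable {A B C : Type*} [AddCommGroup A] [Module R A] [AddCommGroup B] [Module R B]
  [AddCommGroup C] [Module R C] {GA : ModuleGrading 𝒜 A} {GB : ModuleGrading 𝒜 B}
  {GC : ModuleGrading 𝒜 C} {f : A →ₗ[R] B} {g : B →ₗ[R] C} {ι κ : Type*} [Fintype ι] [Fintype κ]
  {EA : MinimalGenerators GA ι} {EB : MinimalGenerators GB (ι ⊕ κ)} {EC : MinimalGenerators GC κ}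

/-- The generators `EB` of the middle term of a short exact sequence consist of the images of the
generators `EA` of the left term and of lifts of the generators `EC` of the right term. -/
structure IsHorseshoe (f : A →ₗ[R] B) (g : B →ₗ[R] C) (EA : MinimalGenerators GA ι)
    (EB : MinimalGenerators GB (ι ⊕ κ)) (EC : MinimalGenerators GC κ) : Prop where
  gen_inl (i : ι) : EB.gen (Sum.inl i) = f (EA.gen i)
  apply_gen_inr (i : κ) : g (EB.gen (Sum.inr i)) = EC.gen i
  deg_inl (i : ι) : EB.deg (Sum.inl i) = EA.deg i
  deg_inr (i : κ) : EB.deg (Sum.inr i) = EC.deg i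

namespace GradedShortExact

theorem exists_isHorseshoe (S : GradedShortExact GA GB GC f g) (EA : MinimalGenerators GA ι)
    (EC : MinimalGenerators GC κ) (hdeg : ∀ i j, EA.deg i ≤ EC.deg j) :
    ∃ EB : MinimalGenerators GB (ι ⊕ κ), IsHorseshoe f g EA EB EC := by
  choose b hb hbc using fun i => S.exists_homogeneous_lift (EC.component_gen i)
  have cover_eq (r : ι ⊕ κ → R) : Fintype.linearCombination R (Sum.elim (f ∘ EA.gen) b) r =
      f (EA.cover (r ∘ Sum.inl)) + Fintype.linearCombination R b (r ∘ Sum.inr) := by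
    simp [Fintype.linearCombination_apply, Fintype.sum_sum_type]
  have apply_lifts (r : κ → R) : g (Fintype.linearCombination R b r) = EC.cover r := by
    simp [Fintype.linearCombination_apply, hb]
  have component_gen : ∀ i, GB.component (Sum.elim EA.deg EC.deg i) (Sum.elim (f ∘ EA.gen) b i) =
      Sum.elim (f ∘ EA.gen) b i :=
    Sum.rec (fun i => by simp [← S.map_left, EA.component_gen]) hbc
  have surjective : Function.Surjective
      (Fintype.linearCombination R (Sum.elim (f ∘ EA.gen) b)) := fun y => by
    obtain ⟨s, hs⟩ := EC.surjective (g y)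
    obtain ⟨x, hx⟩ := S.exists_eq_add_of_apply_eq (hs.symm.trans (apply_lifts s).symm)
    obtain ⟨r, rfl⟩ := EA.surjective x
    exact ⟨Sum.elim r s, by rw [cover_eq, hx]; rfl⟩
  have minimal (r) (hr : Fintype.linearCombination R (Sum.elim (f ∘ EA.gen) b) r = 0) :
      ∀ i, r i ∈ HomogeneousIdeal.irrelevant 𝒜 := by
    rw [cover_eq] at hr
    have hright : ∀ i, r (Sum.inr i) ∈ HomogeneousIdeal.irrelevant 𝒜 := by
      refine EC.minimal (r ∘ Sum.inr) ?_
      rw [← apply_lifts, ← map_zero g, ← hr, map_add, S.apply_apply_eq_zero, zero_add]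
    refine Sum.rec (fun i => ?_) hright
    refine EA.mem_irrelevant_of_component_cover_eq_zero (r := r ∘ Sum.inl)
      (S.component_left_eq_zero ?_)
    rw [eq_neg_of_add_eq_zero_left hr, map_neg, GB.component_linearCombination hbc, neg_eq_zero,
      ← map_zero (Fintype.linearCombination R b)]
    congr 1
    funext j
    exact twistProj_eq_zero_of_mem_irrelevant 𝒜 (hright j) (hdeg i j)
  exact ⟨⟨_, _, component_gen, surjective, minimal⟩, fun _ => rfl, hb, fun _ => rfl, fun _ => rfl⟩

end GradedShortExact

namespace IsHorseshoe

theorem cover_sumElim_zero (H : IsHorseshoe f g EA EB EC) (r : ι → R) :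
    EB.cover (Sum.elim r 0) = f (EA.cover r) := by
  simp [Fintype.linearCombination_apply, H.gen_inl]

theorem apply_cover (H : IsHorseshoe f g EA EB EC) (S : GradedShortExact GA GB GC f g)
    (r : ι ⊕ κ → R) : g (EB.cover r) = EC.cover (r ∘ Sum.inr) := by
  simp [Fintype.linearCombination_apply, H.gen_inl, H.apply_gen_inr, S.apply_apply_eq_zero]

theorem cover_comp_inl_eq_zero (H : IsHorseshoe f g EA EB EC) (S : GradedShortExact GA GB GC f g)
    {r : ι ⊕ κ → R} (hr : EB.cover r = 0) (hinr : r ∘ Sum.inr = 0) : EA.cover (r ∘ Sum.inl) = 0 :=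
  S.injective <| by rw [← H.cover_sumElim_zero, ← hinr, Sum.elim_comp_inl_inr, hr, map_zero]

theorem exists_cover_eq_zero_of_right (H : IsHorseshoe f g EA EB EC)
    (S : GradedShortExact GA GB GC f g) {s : κ → R} (hs : EC.cover s = 0) :
    ∃ r, EB.cover r = 0 ∧ r ∘ Sum.inr = s := by
  have hg : g (EB.cover (Sum.elim (0 : ι → R) s)) = 0 := by
    rw [H.apply_cover S, Sum.elim_comp_inr, hs]
  obtain ⟨x, hx⟩ := (S.exact _).mp hg
  obtain ⟨t, rfl⟩ := EA.surjective x
  refine ⟨Sum.elim (0 : ι → R) s - Sum.elim t 0, ?_, funext fun i => ?_⟩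
  · rw [map_sub, H.cover_sumElim_zero, hx, sub_self]
  · simp

theorem exists_gradedShortExact_syzygies (H : IsHorseshoe f g EA EB EC)
    (S : GradedShortExact GA GB GC f g) :
    ∃ f' g', GradedShortExact EA.syzygyGrading EB.syzygyGrading EC.syzygyGrading f' g' := by
  let inl : (ι → R) →ₗ[R] (ι ⊕ κ → R) :=
    (LinearEquiv.sumArrowLequivProdArrow ι κ R R).symm.toLinearMap ∘ₗ LinearMap.inl R _ _
  have inl_mem (r) (hr : r ∈ LinearMap.ker EA.cover) : inl r ∈ LinearMap.ker EB.cover :=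
    (H.cover_sumElim_zero r).trans (by rw [LinearMap.mem_ker.mp hr, map_zero])
  have inr_mem (r) (hr : r ∈ LinearMap.ker EB.cover) :
      LinearMap.funLeft R R Sum.inr r ∈ LinearMap.ker EC.cover :=
    (H.apply_cover S r).symm.trans (by rw [LinearMap.mem_ker.mp hr, map_zero])
  refine ⟨inl.restrict inl_mem, (LinearMap.funLeft R R Sum.inr).restrict inr_mem,
    ?_, ?_, ?_, ?_, ?_⟩
  · refine fun j r => Subtype.ext (funext (Sum.rec (fun i => ?_) fun i => ?_))
    · exact congrArg (twistProj 𝒜 · j (r.1 i)) (H.deg_inl i).symm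
    · exact (map_zero (twistProj 𝒜 (EB.deg (Sum.inr i)) j)).symm
  · exact fun j r => Subtype.ext <| funext fun i =>
      congrArg (twistProj 𝒜 · j (r.1 (Sum.inr i))) (H.deg_inr i)
  · intro r r' h
    exact Subtype.ext <| funext fun i => congrFun (congrArg Subtype.val h) (Sum.inl i)
  · rintro ⟨s, hs⟩
    obtain ⟨r, hr, rfl⟩ := H.exists_cover_eq_zero_of_right S hs
    exact ⟨⟨r, hr⟩, rfl⟩
  · rintro ⟨r, hr⟩
    constructor
    · intro h
      have hinr : r ∘ Sum.inr = 0 := congrArg Subtype.val h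
      refine ⟨⟨r ∘ Sum.inl, H.cover_comp_inl_eq_zero S hr hinr⟩, Subtype.ext ?_⟩
      exact (congrArg (Sum.elim _) hinr.symm).trans (Sum.elim_comp_inl_inr r)
    · rintro ⟨s, hs⟩
      rw [← hs]
      rfl

end IsHorseshoe

end Horseshoe

namespace HasMinimalResolution

variable {n : ℕ} {A B C : Type u} [AddCommGroup A] [Module R A] [AddCommGroup B] [Module R B]
  [AddCommGroup C] [Module R C] {GA : ModuleGrading 𝒜 A} {GB : ModuleGrading 𝒜 B}
  {GC : ModuleGrading 𝒜 C} {f : A →ₗ[R] B} {g : B →ₗ[R] C}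
  {DA DB DC D : ℕ → Set ℕ} {α β γ : ℕ → ℕ}

theorem horseshoe (S : GradedShortExact GA GB GC f g) (hA : HasMinimalResolution n DA α GA)
    (hC : HasMinimalResolution n DC γ GC) (hle : ∀ i, ∀ a ∈ DA i, ∀ c ∈ DC i, a ≤ c) :
    HasMinimalResolution n (DA ⊔ DC) (α + γ) GB := by
  induction n generalizing A B C DA DC α γ with
  | zero =>
    have := hA.1
    have := hC.1
    refine ⟨subsingleton_of_forall_eq 0 fun y => ?_, fun i => by simp [hA.2, hC.2]⟩
    obtain ⟨x, rfl⟩ := (S.exact y).mp (Subsingleton.elim _ _)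
    rw [Subsingleton.elim x 0, map_zero]
  | succ n ih =>
    obtain ⟨ι, _, EA, hcardA, hdegA, hsyzA⟩ := hA
    obtain ⟨κ, _, EC, hcardC, hdegC, hsyzC⟩ := hC
    obtain ⟨EB, H⟩ := S.exists_isHorseshoe EA EC fun i j => hle 0 _ (hdegA i) _ (hdegC j)
    obtain ⟨f', g', S'⟩ := H.exists_gradedShortExact_syzygies S
    refine ⟨ι ⊕ κ, inferInstance, EB, by simp [hcardA, hcardC], Sum.rec (fun i => ?_) fun i => ?_,
      ih S' hsyzA hsyzC fun i => hle (i + 1)⟩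
    · exact Or.inl (H.deg_inl i ▸ hdegA i)
    · exact Or.inr (H.deg_inr i ▸ hdegC i)

end HasMinimalResolution

end ShortExact

section MappingCone

variable {R : Type u} [CommRing R] {σ : Type*} [SetLike σ R] [AddSubmonoidClass σ R]
  {𝒜 : ℕ → σ} [GradedRing 𝒜]

section

variable {A B C : Type*} [AddCommGroup A] [Module R A] [AddCommGroup B] [Module R B]
  [AddCommGroup C] [Module R C] {GA : ModuleGrading 𝒜 A} {GB : ModuleGrading 𝒜 B}
  {GC : ModuleGrading 𝒜 C} {f : A →ₗ[R] B} {g : B →ₗ[R] C} {ι : Type*} [Fintype ι]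

namespace MinimalGenerators

/-- The generators of the right term of a short exact sequence that are images of generators of the
middle term. They are minimal if the left term vanishes in the degrees of the generators. -/
@[simps]
def descend (EB : MinimalGenerators GB ι) (S : GradedShortExact GA GB GC f g)
    (hA : ∀ i x, GA.component (EB.deg i) x = 0) : MinimalGenerators GC ι where
  gen := g ∘ EB.gen
  deg := EB.deg
  component_gen i := by simp [← S.map_right, EB.component_gen]
  surjective z := by
    obtain ⟨y, rfl⟩ := S.surjective z
    obtain ⟨r, rfl⟩ := EB.surjective y
    exact ⟨r, by simp [Fintype.linearCombination_apply]⟩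
  minimal r hr i := by
    have hr' : g (EB.cover r) = 0 := by simpa [Fintype.linearCombination_apply] using hr
    obtain ⟨x, hx⟩ := (S.exact _).mp hr'
    exact EB.mem_irrelevant_of_component_cover_eq_zero <| by
      rw [← hx, ← S.map_left, hA i x, map_zero]

theorem cover_descend (EB : MinimalGenerators GB ι) (S : GradedShortExact GA GB GC f g)
    (hA : ∀ i x, GA.component (EB.deg i) x = 0) (r : ι → R) :
    (EB.descend S hA).cover r = g (EB.cover r) := by
  simp [Fintype.linearCombination_apply]

end MinimalGenerators

theorem GradedShortExact.exists_gradedShortExact_syzygies_descend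
    (S : GradedShortExact GA GB GC f g) (EB : MinimalGenerators GB ι)
    (hA : ∀ i x, GA.component (EB.deg i) x = 0) :
    ∃ f' g', GradedShortExact EB.syzygyGrading (EB.descend S hA).syzygyGrading GA f' g' := by
  have cover_mem (r) (hr : r ∈ LinearMap.ker (EB.descend S hA).cover) :
      EB.cover r ∈ LinearMap.range f :=
    (S.exact _).mp ((EB.cover_descend S hA r).symm.trans hr)
  have ker_le : LinearMap.ker EB.cover ≤ LinearMap.ker (EB.descend S hA).cover := fun r hr =>
    (EB.cover_descend S hA r).trans (by rw [LinearMap.mem_ker.mp hr, map_zero])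
  let δ := (LinearEquiv.ofInjective f S.injective).symm.toLinearMap ∘ₗ EB.cover.restrict cover_mem
  have apply_δ (r) : f (δ r) = EB.cover r :=
    congrArg Subtype.val ((LinearEquiv.ofInjective f S.injective).apply_symm_apply _)
  refine ⟨Submodule.inclusion ker_le, δ, fun j r => rfl, fun j r => S.injective ?_,
    Submodule.inclusion_injective ker_le, fun x => ?_, fun r => ?_⟩
  · rw [apply_δ, S.map_left, apply_δ, EB.component_cover]
    rfl
  · obtain ⟨r, hr⟩ := EB.surjective (f x)
    refine ⟨⟨r, ?_⟩, S.injective ((apply_δ _).trans hr)⟩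
    rw [LinearMap.mem_ker, EB.cover_descend]
    exact (congrArg g hr).trans (S.apply_apply_eq_zero x)
  · rw [← S.injective.eq_iff, apply_δ, map_zero]
    exact ⟨fun h => ⟨⟨r, h⟩, rfl⟩, fun ⟨s, hs⟩ => hs ▸ s.2⟩

end

namespace HasMinimalResolution

variable {n : ℕ} {A B C : Type u} [AddCommGroup A] [Module R A] [AddCommGroup B] [Module R B]
  [AddCommGroup C] [Module R C] {GA : ModuleGrading 𝒜 A} {GB : ModuleGrading 𝒜 B}
  {GC : ModuleGrading 𝒜 C} {f : A →ₗ[R] B} {g : B →ₗ[R] C}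
  {DA DB D : ℕ → Set ℕ} {α β γ : ℕ → ℕ}

theorem mappingCone (S : GradedShortExact GA GB GC f g) (hA : HasMinimalResolution n DA α GA)
    (hB : HasMinimalResolution (n + 1) DB β GB) (hlt : ∀ b ∈ DB 0, ∀ a ∈ DA 0, b < a)
    (hle : ∀ i, ∀ b ∈ DB (i + 1), ∀ a ∈ DA i, b ≤ a) (hDB : DB ≤ D) (hDA : ∀ i, DA i ≤ D (i + 1))
    (h₀ : γ 0 = β 0) (hsucc : ∀ i, γ (i + 1) = β (i + 1) + α i) :
    HasMinimalResolution (n + 1) D γ GC := by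
  obtain ⟨ι, _, EB, hcard, hdeg, hsyz⟩ := hB
  have hlow (i : ι) (x : A) : GA.component (EB.deg i) x = 0 :=
    hA.component_eq_zero (hlt _ (hdeg i)) x
  obtain ⟨f', g', S'⟩ := S.exists_gradedShortExact_syzygies_descend EB hlow
  refine ⟨ι, inferInstance, EB.descend S hlow, hcard.trans h₀.symm, fun i => hDB 0 (hdeg i), ?_⟩
  rw [show (fun i => γ (i + 1)) = (fun i => β (i + 1)) + α from funext hsucc]
  exact (horseshoe S' hsyz hA hle).weaken fun i => sup_le (hDB (i + 1)) (hDA i)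

end HasMinimalResolution

end MappingCone

section Submodules

variable {R : Type u} [CommRing R] {σ : Type*} [SetLike σ R] [AddSubmonoidClass σ R]
  {𝒜 : ℕ → σ} [GradedRing 𝒜]

section

variable {M N : Type*} [AddCommGroup M] [Module R M] [AddCommGroup N] [Module R N]

theorem gradedShortExact_inl_snd (G : ModuleGrading 𝒜 M) (H : ModuleGrading 𝒜 N) :
    GradedShortExact G (G.prod H) H (LinearMap.inl R M N) (LinearMap.snd R M N) where
  map_left j x := by simp
  map_right j x := rfl
  injective := LinearMap.inl_injective
  surjective := LinearMap.snd_surjective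
  exact := Function.Exact.inl_snd

theorem gradedShortExact_inf_sup (G : ModuleGrading 𝒜 M) {N₁ N₂ : Submodule R M}
    (h₁ : G.IsStable N₁) (h₂ : G.IsStable N₂) :
    GradedShortExact (G.restrict (N₁ ⊓ N₂) (h₁.inf h₂)) ((G.restrict N₁ h₁).prod (G.restrict N₂ h₂))
      (G.restrict (N₁ ⊔ N₂) (h₁.sup h₂))
      ((Submodule.inclusion inf_le_left).prod (Submodule.inclusion inf_le_right))
      ((Submodule.inclusion le_sup_left).coprod (-Submodule.inclusion le_sup_right)) where
  map_left _ _ := rfl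
  map_right j x := Subtype.ext <| by simp
  injective x y h := Subtype.ext <| congrArg (fun z => z.1.1) h
  surjective := by
    rintro ⟨x, hx⟩
    obtain ⟨y, hy, z, hz, rfl⟩ := Submodule.mem_sup.mp hx
    exact ⟨⟨⟨y, hy⟩, -⟨z, hz⟩⟩, Subtype.ext <| by simp⟩
  exact := by
    rintro ⟨x, y⟩
    constructor
    · intro h
      have hxy : (x : M) = y := sub_eq_zero.mp <| by
        simpa [sub_eq_add_neg] using congrArg Subtype.val h
      exact ⟨⟨x, x.2, hxy ▸ y.2⟩, Prod.ext rfl (Subtype.ext hxy)⟩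
    · rintro ⟨z, hz⟩
      rw [← hz]
      exact Subtype.ext (add_neg_cancel (z : M))

end

namespace HasMinimalResolution

variable {n : ℕ} {M : Type u} [AddCommGroup M] [Module R M]

theorem sup_of_linear {G : ModuleGrading 𝒜 M} {N₁ N₂ : Submodule R M} {h₁ : G.IsStable N₁}
    {h₂ : G.IsStable N₂} {p : ℕ} {D₁₂ D : ℕ → Set ℕ} {β₁ β₂ β₁₂ β : ℕ → ℕ}
    (H₁ : HasMinimalResolution (n + 1) (fun i => {p + i}) β₁ (G.restrict N₁ h₁))
    (H₂ : HasMinimalResolution (n + 1) (fun i => {p + i}) β₂ (G.restrict N₂ h₂))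
    (H₁₂ : HasMinimalResolution n D₁₂ β₁₂ (G.restrict (N₁ ⊓ N₂) (h₁.inf h₂)))
    (hlt : ∀ i, ∀ d ∈ D₁₂ i, p + i < d) (hD : ∀ i, p + i ∈ D i) (hD₁₂ : ∀ i, D₁₂ i ⊆ D (i + 1))
    (h₀ : β 0 = β₁ 0 + β₂ 0) (hsucc : ∀ i, β (i + 1) = β₁ (i + 1) + β₂ (i + 1) + β₁₂ i) :
    HasMinimalResolution (n + 1) D β (G.restrict (N₁ ⊔ N₂) (h₁.sup h₂)) := by
  have hprod := (horseshoe (gradedShortExact_inl_snd _ _) H₁ H₂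
    (by simp)).weaken (D' := fun i => {p + i}) fun i => sup_le le_rfl le_rfl
  refine mappingCone (gradedShortExact_inf_sup G h₁ h₂) H₁₂ hprod ?_ ?_
    (fun i => Set.singleton_subset_iff.mpr (hD i)) hD₁₂ h₀ hsucc
  · simpa using hlt 0
  · rintro i _ rfl d hd
    exact hlt i d hd

theorem self : HasMinimalResolution (n + 1) (fun i => {i}) (Pi.single 0 1)
    (ModuleGrading.self 𝒜) := by
  let E : MinimalGenerators (ModuleGrading.self 𝒜) Unit :=
    { gen := fun _ => 1
      deg := fun _ => 0
      component_gen := fun _ => by simpa [twistProj_zero] using twistProj_self_one 𝒜 0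
      surjective := fun r => ⟨fun _ => r, by simp [Fintype.linearCombination_apply]⟩
      minimal := fun r hr i => by
        rw [show r i = 0 by simpa [Fintype.linearCombination_apply] using hr]
        exact zero_mem _ }
  have : Subsingleton (LinearMap.ker E.cover) := subsingleton_of_forall_eq 0 <| by
    rintro ⟨r, hr⟩
    ext
    simpa [E, Fintype.linearCombination_apply] using hr
  exact ⟨Unit, inferInstance, E, rfl, fun _ => rfl, of_subsingleton⟩

theorem mul {I J : Ideal R} {hI : (ModuleGrading.self 𝒜).IsStable I}
    {hJ : (ModuleGrading.self 𝒜).IsStable J} {x : R} {s : ℕ} {D D' : ℕ → Set ℕ} {β : ℕ → ℕ}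
    (H : HasMinimalResolution n D β ((ModuleGrading.self 𝒜).restrict I hI)) (hx : x ∈ 𝒜 s)
    (hreg : IsLeftRegular x) (hIJ : J = Submodule.map (LinearMap.mulLeft R x) I)
    (hD : ∀ i, ∀ d ∈ D i, d + s ∈ D' i) :
    HasMinimalResolution n D' β ((ModuleGrading.self 𝒜).restrict J hJ) := by
  subst hIJ
  refine H.of_equiv (Submodule.equivMapOfInjective (LinearMap.mulLeft R x) hreg I)
    (fun j y => Subtype.ext ?_) hD
  have h := twistProj_mul_of_mem 𝒜 (d := 0) (j := j + s) y.1 hx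
  rw [twistProj_add_right, twistProj_zero, twistProj_zero, mul_comm, mul_comm _ x] at h
  exact h.symm

theorem span_singleton {J : Ideal R} {hJ : (ModuleGrading.self 𝒜).IsStable J} {x : R} {s : ℕ}
    (hx : x ∈ 𝒜 s) (hreg : IsLeftRegular x) (hxJ : J = Ideal.span {x}) :
    HasMinimalResolution (n + 1) (fun i => {s + i}) (Pi.single 0 1)
      ((ModuleGrading.self 𝒜).restrict J hJ) := by
  have htop : (ModuleGrading.self 𝒜).IsStable (⊤ : Ideal R) := fun _ _ _ => trivial
  have H : HasMinimalResolution (n + 1) (fun i => {i}) (Pi.single 0 1)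
      ((ModuleGrading.self 𝒜).restrict ⊤ htop) :=
    HasMinimalResolution.self.of_equiv (s := 0) Submodule.topEquiv.symm (fun _ _ => rfl)
      fun _ _ => id
  refine H.mul hx hreg ?_ ?_
  · rw [hxJ, Submodule.map_top]
    exact (Ideal.range_mul' x).symm
  · rintro i _ rfl
    exact add_comm _ s

end HasMinimalResolution

end Submodules

end GradedResolution

section MinimalFreeResolution

variable {R : Type u} [CommRing R]

/-- A free resolution of `M` whose `i`-th term has rank `β i` and whose differentials vanish
modulo the ideal `I`. -/
structure MinimalFreeResolution (I : Ideal R) (M : Type u) [AddCommGroup M] [Module R M]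
    (β : ℕ → ℕ) where
  d (i : ℕ) : (Fin (β (i + 1)) → R) →ₗ[R] (Fin (β i) → R)
  augmentation : (Fin (β 0) → R) →ₗ[R] M
  surjective : Function.Surjective augmentation
  exact_augmentation : Function.Exact (d 0) augmentation
  exact (i : ℕ) : Function.Exact (d (i + 1)) (d i)
  d_mem (i : ℕ) (x : Fin (β (i + 1)) → R) (j : Fin (β i)) : d i x j ∈ I

namespace MinimalFreeResolution

variable {I : Ideal R} {M : Type u} [AddCommGroup M] [Module R M] {β : ℕ → ℕ}

theorem of_exact {N : Type u} [AddCommGroup N] [Module R N] {ι : Type*} [Fintype ι]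
    (hι : Fintype.card ι = β 0) (f : (ι → R) →ₗ[R] M) (g : N →ₗ[R] (ι → R))
    (hf : Function.Surjective f) (hgf : Function.Exact g f) (hg : Function.Injective g)
    (hI : ∀ x i, g x i ∈ I) (h : Nonempty (MinimalFreeResolution I N fun i => β (i + 1))) :
    Nonempty (MinimalFreeResolution I M β) := by
  obtain ⟨P⟩ := h
  let e := Fintype.equivFinOfCardEq hι
  let E : (Fin (β 0) → R) ≃ₗ[R] (ι → R) := LinearEquiv.funCongrLeft R R e
  refine ⟨{
    d := fun
      | 0 => E.symm.toLinearMap ∘ₗ g ∘ₗ P.augmentation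
      | i + 1 => P.d i
    augmentation := f ∘ₗ E.toLinearMap
    surjective := hf.comp E.surjective
    exact_augmentation := fun x => ?_
    exact := fun
      | 0 => fun x => ?_
      | i + 1 => P.exact i
    d_mem := fun
      | 0 => fun x j => hI _ _
      | i + 1 => P.d_mem i }⟩
  · refine (hgf (E x)).trans ⟨fun ⟨y, hy⟩ => ?_, fun ⟨z, hz⟩ => ⟨P.augmentation z, ?_⟩⟩
    · obtain ⟨z, rfl⟩ := P.surjective y
      exact ⟨z, E.symm_apply_eq.2 hy⟩
    · exact E.symm_apply_eq.1 hz
  · refine Iff.trans ?_ (P.exact_augmentation x)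
    exact (E.symm.map_eq_zero_iff).trans (map_eq_zero_iff g hg)

theorem quotient {J : Ideal R} (hJ : J ≤ I) (hβ : β 0 = 1)
    (h : Nonempty (MinimalFreeResolution I J fun i => β (i + 1))) :
    Nonempty (MinimalFreeResolution I (R ⧸ J) β) := by
  refine of_exact (ι := Unit) (by simp [hβ]) (J.mkQ ∘ₗ LinearMap.proj ())
    (LinearMap.pi fun _ => J.subtype) (fun x => ?_) (fun x => ?_) (fun x y hxy => ?_)
    (fun x _ => hJ x.2) h
  · obtain ⟨y, rfl⟩ := J.mkQ_surjective x
    exact ⟨fun _ => y, rfl⟩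
  · refine (Submodule.Quotient.mk_eq_zero J).trans ⟨fun hx => ⟨⟨x (), hx⟩, rfl⟩, ?_⟩
    rintro ⟨y, rfl⟩
    exact y.2
  · exact Subtype.ext (congrFun hxy ())

variable (P : MinimalFreeResolution I M β)

/-- The underlying complex of free modules. -/
noncomputable def complex : ChainComplex (ModuleCat.{u} R) ℕ :=
  ChainComplex.of (fun i => ModuleCat.of R (Fin (β i) → R)) (fun i => ModuleCat.ofHom (P.d i))
    fun i => by
      ext1
      exact (P.exact i).linearMap_comp_eq_zero

theorem complex_d_succ (i : ℕ) : P.complex.d (i + 1) i = ModuleCat.ofHom (P.d i) :=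
  ChainComplex.of_d (fun i => ModuleCat.of R (Fin (β i) → R)) (fun i => ModuleCat.ofHom (P.d i)) i

theorem exactAt_succ (i : ℕ) : P.complex.ExactAt (i + 1) := by
  rw [HomologicalComplex.exactAt_iff' _ (i + 1 + 1) (i + 1) i (by simp) (by simp),
    ShortComplex.ShortExact.moduleCat_exact_iff_function_exact]
  change Function.Exact (P.complex.d (i + 1 + 1) (i + 1)) (P.complex.d (i + 1) i)
  rw [complex_d_succ, complex_d_succ]
  exact P.exact i

theorem complex_d_comp_augmentation :
    P.complex.d 1 0 ≫ ModuleCat.ofHom P.augmentation = 0 := by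
  rw [complex_d_succ]
  ext1
  exact P.exact_augmentation.linearMap_comp_eq_zero

/-- A minimal free resolution as a projective resolution in the category of modules. -/
noncomputable def projectiveResolution : ProjectiveResolution (ModuleCat.of R M) where
  complex := P.complex
  projective i := inferInstanceAs (Projective (ModuleCat.of R (Fin (β i) → R)))
  π := (ChainComplex.toSingle₀Equiv _ _).symm
    ⟨ModuleCat.ofHom P.augmentation, P.complex_d_comp_augmentation⟩
  quasiIso := ⟨fun
    | 0 => by
      have hexact : (ShortComplex.mk _ _ P.complex_d_comp_augmentation).Exact := by
        rw [ShortComplex.ShortExact.moduleCat_exact_iff_function_exact]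
        change Function.Exact (P.complex.d 1 0) P.augmentation
        rw [complex_d_succ]
        exact P.exact_augmentation
      rw [ChainComplex.quasiIsoAt₀_iff, ShortComplex.quasiIso_iff_of_zeros' _ rfl rfl rfl]
      refine (ShortComplex.exact_and_epi_g_iff_of_iso ?_).2
        ⟨hexact, (ModuleCat.epi_iff_surjective _).2 P.surjective⟩
      exact ShortComplex.isoMk (Iso.refl _) (Iso.refl _) (Iso.refl _)
        ((Category.id_comp _).trans (Category.comp_id _).symm)
        ((Category.id_comp _).trans (Category.comp_id _).symm)
    | i + 1 => (quasiIsoAt_iff_exactAt' _ _ (ChainComplex.exactAt_succ_single_obj _ _)).2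
        (P.exactAt_succ i)⟩

theorem complex_d_mem (i j : ℕ) (x : Fin (β i) → R) (t : Fin (β j)) :
    (P.complex.d i j x : Fin (β j) → R) t ∈ I := by
  by_cases hij : j + 1 = i
  · subst hij
    rw [complex_d_succ]
    exact P.d_mem j x t
  · rw [P.complex.shape i j hij]
    exact I.zero_mem

open scoped MonoidalCategory in
theorem whiskerLeft_complex_d (i j : ℕ) : ModuleCat.of R (R ⧸ I) ◁ P.complex.d i j = 0 := by
  ext1
  rw [ModuleCat.hom_whiskerLeft]
  refine TensorProduct.ext' fun q x => ?_
  apply (TensorProduct.piScalarRight R R (R ⧸ I) (Fin (β j))).injective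
  rw [LinearMap.lTensor_tmul]
  erw [TensorProduct.piScalarRight_apply, TensorProduct.piScalarRightHom_tmul]
  funext t
  obtain ⟨y, rfl⟩ := Ideal.Quotient.mk_surjective q
  exact Ideal.Quotient.eq_zero_iff_mem.2 (I.mul_mem_right y (P.complex_d_mem i j x t))

/-- The tensor product of a minimal free resolution with `R ⧸ I` has zero differentials, so it
computes `Tor`. -/
noncomputable def torLinearEquiv (i : ℕ) :
    ((Tor (ModuleCat.{u} R) i).obj (ModuleCat.of R (R ⧸ I))).obj (ModuleCat.of R M)
      ≃ₗ[R] (Fin (β i) → R ⧸ I) :=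
  let F := (MonoidalCategory.tensoringLeft (ModuleCat R)).obj (ModuleCat.of R (R ⧸ I))
  let K := (F.mapHomologicalComplex (ComplexShape.down ℕ)).obj P.complex
  have hd (i j : ℕ) : K.d i j = 0 := P.whiskerLeft_complex_d i j
  let homologyIso := (ShortComplex.HomologyData.ofZeros (K.sc i) (hd _ _) (hd _ _)).left.homologyIso
  (P.projectiveResolution.isoLeftDerivedObj F i ≪≫ homologyIso).toLinearEquiv.trans
    (TensorProduct.piScalarRight R R (R ⧸ I) (Fin (β i)))

end MinimalFreeResolution

namespace GradedResolution

variable {σ : Type*} [SetLike σ R] [AddSubmonoidClass σ R] {𝒜 : ℕ → σ} [GradedRing 𝒜]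

theorem HasMinimalResolution.nonempty_minimalFreeResolution {n : ℕ} {D : ℕ → Set ℕ} {β : ℕ → ℕ}
    {M : Type u} [AddCommGroup M] [Module R M] {G : ModuleGrading 𝒜 M} {I : Ideal R}
    (hI : (HomogeneousIdeal.irrelevant 𝒜).toIdeal ≤ I) (h : HasMinimalResolution n D β G) :
    Nonempty (MinimalFreeResolution I M β) := by
  induction n generalizing D β M with
  | zero =>
    have := h.1
    obtain rfl : β = 0 := funext h.2
    exact ⟨{
      d := fun _ => 0
      augmentation := 0
      surjective := fun _ => ⟨0, Subsingleton.elim _ _⟩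
      exact_augmentation := fun _ => ⟨fun _ => ⟨0, funext fun j => j.elim0⟩, fun _ => rfl⟩
      exact := fun _ x => ⟨fun _ => ⟨0, funext fun j => j.elim0⟩, fun _ => rfl⟩
      d_mem := fun _ _ j => j.elim0 }⟩
  | succ n ih =>
    obtain ⟨ι, _, E, hcard, -, hsyz⟩ := h
    exact MinimalFreeResolution.of_exact hcard E.cover (LinearMap.ker E.cover).subtype E.surjective
      (LinearMap.exact_subtype_ker_map _) Subtype.val_injective
      (fun x i => hI (E.minimal _ x.2 i)) (ih hsyz)

end GradedResolution

end MinimalFreeResolution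

open MvPolynomial

section Betti

attribute [local instance] MvPolynomial.gradedAlgebra

theorem mem_maxIdl_iff {k : Type} [Field k] {n : ℕ} {p : MvPolynomial (Fin n) k} :
    p ∈ maxIdl k n ↔ constantCoeff p = 0 := by
  have h := mem_pow_idealOfVars_iff' 1 p
  rw [pow_one] at h
  exact h.trans (by simp [Finsupp.degree_eq_zero_iff, constantCoeff_eq])

theorem irrelevant_le_maxIdl (k : Type) [Field k] (n : ℕ) :
    (HomogeneousIdeal.irrelevant (homogeneousSubmodule (Fin n) k)).toIdeal ≤ maxIdl k n := by
  intro p hp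
  rw [mem_maxIdl_iff, constantCoeff_eq]
  rw [HomogeneousIdeal.mem_iff, HomogeneousIdeal.mem_irrelevant_iff, GradedRing.proj_apply] at hp
  have h : (DirectSum.decompose (homogeneousSubmodule (Fin n) k) p 0 : MvPolynomial (Fin n) k) =
      homogeneousComponent 0 p := decomposition.decompose'_apply p 0
  simpa [h, homogeneousComponent_zero] using hp

theorem rank_restrictScalars_of_linearEquiv {k : Type} [Field k] {n s : ℕ} {A : Type}
    [AddCommGroup A] [Module (MvPolynomial (Fin n) k) A]
    (e : A ≃ₗ[MvPolynomial (Fin n) k] (Fin s → MvPolynomial (Fin n) k ⧸ maxIdl k n)) :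
    Module.rank k (RestrictScalars k (MvPolynomial (Fin n) k) A) = s := by
  have hker : maxIdl k n = RingHom.ker (aeval (0 : Fin n → k)) := by
    ext p
    simp [mem_maxIdl_iff, RingHom.mem_ker]
  let residue : (MvPolynomial (Fin n) k ⧸ maxIdl k n) ≃ₐ[k] k :=
    (Ideal.quotientEquivAlgOfEq k hker).trans
      (Ideal.quotientKerAlgEquivOfSurjective fun c => ⟨C c, by simp⟩)
  let := RestrictScalars.moduleOrig k (MvPolynomial (Fin n) k) A
  let e' : RestrictScalars k (MvPolynomial (Fin n) k) A ≃ₗ[MvPolynomial (Fin n) k]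
    (Fin s → MvPolynomial (Fin n) k ⧸ maxIdl k n) := e
  rw [((e'.restrictScalars k).trans
    (LinearEquiv.piCongrRight fun _ => residue.toLinearEquiv)).rank_eq]
  simp

theorem MinimalFreeResolution.betti_eq {k : Type} [Field k] {n : ℕ} {M : Type} [AddCommGroup M]
    [Module (MvPolynomial (Fin n) k) M] {β : ℕ → ℕ} (P : MinimalFreeResolution (maxIdl k n) M β)
    (i : ℕ) : betti k n (ModuleCat.of _ M) i = β i :=
  rank_restrictScalars_of_linearEquiv (P.torLinearEquiv i)

end Betti

namespace GradedResolution

section MonomialIdeals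

variable {σ : Type u} {k : Type u} [CommRing k]

attribute [local instance] MvPolynomial.gradedAlgebra

theorem mem_restrictSupportIdeal {U : Set (σ →₀ ℕ)} {hU : IsUpperSet U} {p : MvPolynomial σ k} :
    p ∈ restrictSupportIdeal k U hU ↔ ∀ α ∈ p.support, α ∈ U := Iff.rfl

theorem isStable_restrictSupportIdeal (U : Set (σ →₀ ℕ)) (hU : IsUpperSet U) :
    (ModuleGrading.self (homogeneousSubmodule σ k)).IsStable (restrictSupportIdeal k U hU) := by
  intro j p hp
  have h : (ModuleGrading.self (homogeneousSubmodule σ k)).component j p =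
      homogeneousComponent j p := decomposition.decompose'_apply p j
  rw [h, mem_restrictSupportIdeal]
  intro α hα
  rw [mem_support_iff, coeff_homogeneousComponent] at hα
  exact hp (mem_support_iff.2 (ite_ne_right_iff.1 hα).2)

theorem restrictSupportIdeal_inf {U V : Set (σ →₀ ℕ)} (hU : IsUpperSet U) (hV : IsUpperSet V) :
    restrictSupportIdeal k U hU ⊓ restrictSupportIdeal k V hV =
      restrictSupportIdeal k (U ∩ V) (hU.inter hV) :=
  Submodule.ext fun _ => Set.subset_inter_iff.symm

theorem restrictSupportIdeal_sup {U V : Set (σ →₀ ℕ)} (hU : IsUpperSet U) (hV : IsUpperSet V) :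
    restrictSupportIdeal k U hU ⊔ restrictSupportIdeal k V hV =
      restrictSupportIdeal k (U ∪ V) (hU.union hV) := by
  apply le_antisymm
  · exact sup_le (fun p hp => hp.trans Set.subset_union_left)
      fun p hp => hp.trans Set.subset_union_right
  · intro p hp
    rw [p.as_sum]
    refine Ideal.sum_mem _ fun α hα => ?_
    have hsupp {W : Set (σ →₀ ℕ)} (hW : α ∈ W) : ↑(monomial α (coeff α p)).support ⊆ W :=
      (Finset.coe_subset.2 support_monomial_subset).trans (by simpa using hW)
    exact (hp hα).elim (fun h => Submodule.mem_sup_left (hsupp h))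
      fun h => Submodule.mem_sup_right (hsupp h)

theorem isUpperSet_setOf_ne_zero_and {V : Set (σ →₀ ℕ)} (hV : IsUpperSet V) (i : σ) :
    IsUpperSet {α | α i ≠ 0 ∧ α ∈ V} :=
  fun _ _ hαβ h => ⟨(Nat.pos_of_ne_zero h.1 |>.trans_le (hαβ i)).ne', hV hαβ h.2⟩

/-- Membership in `V` does not depend on the `i`-th exponent (for an upper set `V`, where only one
implication is needed). -/
def IsFreeOf (V : Set (σ →₀ ℕ)) (i : σ) : Prop :=
  ∀ α, Finsupp.single i 1 + α ∈ V → α ∈ V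

theorem IsFreeOf.inter {U V : Set (σ →₀ ℕ)} {i : σ} (hU : IsFreeOf U i) (hV : IsFreeOf V i) :
    IsFreeOf (U ∩ V) i :=
  fun α h => ⟨hU α h.1, hV α h.2⟩

theorem map_mulLeft_X_restrictSupportIdeal {V : Set (σ →₀ ℕ)} (hV : IsUpperSet V) {i : σ}
    (hi : IsFreeOf V i) :
    Submodule.map (LinearMap.mulLeft (MvPolynomial σ k) (X i)) (restrictSupportIdeal k V hV) =
      restrictSupportIdeal k {α | α i ≠ 0 ∧ α ∈ V} (isUpperSet_setOf_ne_zero_and hV i) := by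
  ext p
  constructor
  · rintro ⟨p, hp, rfl⟩
    rw [LinearMap.mulLeft_apply, mem_restrictSupportIdeal, support_X_mul]
    intro α hα
    obtain ⟨β, hβ, rfl⟩ := Finset.mem_map.1 hα
    exact ⟨by simp, hV le_add_self (hp hβ)⟩
  · intro hp
    refine ⟨p.divMonomial (Finsupp.single i 1), mem_restrictSupportIdeal.2 fun α hα => hi α ?_, ?_⟩
    · rw [mem_support_iff, coeff_divMonomial, ← mem_support_iff] at hα
      exact (hp hα).2
    · have hmod : p.modMonomial (Finsupp.single i 1) = 0 := by
        ext α
        by_cases hα : Finsupp.single i 1 ≤ α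
        · exact coeff_modMonomial_of_le _ hα
        · rw [coeff_modMonomial_of_not_le _ hα, coeff_zero, ← notMem_support_iff]
          exact fun h => hα (by simpa [Nat.one_le_iff_ne_zero] using (hp h).1)
      simpa [hmod] using divMonomial_add_modMonomial_single p i

theorem span_monomial_eq_restrictSupportIdeal (α : σ →₀ ℕ) :
    restrictSupportIdeal k (Set.Ici α) (isUpperSet_Ici α) = Ideal.span {monomial α 1} := by
  ext p
  rw [← Set.image_singleton (f := (monomial · (1 : k))), mem_ideal_span_monomial_image]
  simp [mem_restrictSupportIdeal]

variable (k) in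
/-- The monomial ideal with exponents in the upper set `U` has a finite minimal graded free
resolution with `β i` generators in step `i`, all of degree in `D i`. -/
def HasMonomialResolution (D : ℕ → Set ℕ) (β : ℕ → ℕ) (U : Set (σ →₀ ℕ)) : Prop :=
  ∃ (hU : IsUpperSet U) (n : ℕ), HasMinimalResolution n D β
    ((ModuleGrading.self (homogeneousSubmodule σ k)).restrict (restrictSupportIdeal k U hU)
      (isStable_restrictSupportIdeal U hU))

namespace HasMonomialResolution

variable {D : ℕ → Set ℕ} {β : ℕ → ℕ} {U V : Set (σ →₀ ℕ)}

theorem weaken {D' : ℕ → Set ℕ} (h : HasMonomialResolution k D β U) (hD : ∀ i, D i ⊆ D' i) :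
    HasMonomialResolution k D' β U := by
  obtain ⟨hU, n, h⟩ := h
  exact ⟨hU, n, h.weaken hD⟩

theorem empty : HasMonomialResolution k D 0 (∅ : Set (σ →₀ ℕ)) := by
  refine ⟨isUpperSet_empty, 0, subsingleton_of_forall_eq 0 fun p => Subtype.ext ?_, fun _ => rfl⟩
  exact support_eq_empty.1 (Finset.eq_empty_of_forall_notMem fun α hα => p.2 hα)

theorem Ici (α : σ →₀ ℕ) :
    HasMonomialResolution k (fun i => {α.degree + i}) (Pi.single 0 1) (Set.Ici α) :=
  ⟨isUpperSet_Ici α, 1, HasMinimalResolution.span_singleton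
    ((mem_homogeneousSubmodule _ _).2 (isHomogeneous_monomial _ rfl)) isRegular_one.monomial.left
    (span_monomial_eq_restrictSupportIdeal α)⟩

theorem union_X_mul {i : σ} {q : ℕ} {E : ℕ → Set ℕ} {βU βV γ : ℕ → ℕ}
    (hU : HasMonomialResolution k (fun j => {q + 1 + j}) βU U)
    (hV : HasMonomialResolution k (fun j => {q + j}) βV V)
    (hUV : HasMonomialResolution k D γ (U ∩ V)) (hUi : IsFreeOf U i) (hVi : IsFreeOf V i)
    (hD : ∀ j, ∀ d ∈ D j, q + 1 + j ≤ d ∧ d + 1 ∈ E (j + 1)) (hE : ∀ j, q + 1 + j ∈ E j)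
    (h₀ : β 0 = βU 0 + βV 0) (hsucc : ∀ j, β (j + 1) = βU (j + 1) + βV (j + 1) + γ j) :
    HasMonomialResolution k E β (U ∪ {α | α i ≠ 0 ∧ α ∈ V}) := by
  obtain ⟨hU, n₁, H₁⟩ := hU
  obtain ⟨hV, n₂, H₂⟩ := hV
  obtain ⟨hUV, n, H₁₂⟩ := hUV
  have hxV := isUpperSet_setOf_ne_zero_and hV i
  have hX : (X i : MvPolynomial σ k) ∈ homogeneousSubmodule σ k 1 := isHomogeneous_X k i
  have hreg : IsLeftRegular (X i : MvPolynomial σ k) := isRegular_X.left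
  have hinf : restrictSupportIdeal k U hU ⊓ restrictSupportIdeal k _ hxV =
      Submodule.map (LinearMap.mulLeft (MvPolynomial σ k) (X i))
        (restrictSupportIdeal k _ hUV) := by
    rw [restrictSupportIdeal_inf, map_mulLeft_X_restrictSupportIdeal _ (hUi.inter hVi)]
    congr 1
    ext α
    exact and_left_comm
  have Hx₂ : HasMinimalResolution n₂ (fun j => {q + 1 + j}) βV
      ((ModuleGrading.self (homogeneousSubmodule σ k)).restrict _
        (isStable_restrictSupportIdeal _ hxV)) :=
    H₂.mul hX hreg (map_mulLeft_X_restrictSupportIdeal hV hVi).symm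
      (by rintro j _ rfl; exact add_right_comm q j 1)
  have Hx₁₂ := H₁₂.mul (D' := fun j => (· + 1) '' D j)
    (hJ := (isStable_restrictSupportIdeal U hU).inf (isStable_restrictSupportIdeal _ hxV)) hX hreg
    hinf fun j d hd => ⟨d, hd, rfl⟩
  refine ⟨hU.union hxV, max n (max n₁ n₂) + 1, ?_⟩
  refine (HasMinimalResolution.sup_of_linear (H₁.mono (by omega)) (Hx₂.mono (by omega))
    (Hx₁₂.mono (by omega)) ?_ hE ?_ h₀ hsucc).of_equiv (s := 0)
    (LinearEquiv.ofEq _ _ (restrictSupportIdeal_sup hU hxV)) (fun _ _ => rfl) fun _ _ => id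
  · rintro j _ ⟨d, hd, rfl⟩
    exact Nat.lt_succ_of_le (hD j d hd).1
  · rintro j _ ⟨d, hd, rfl⟩
    exact (hD j d hd).2

end HasMonomialResolution

end MonomialIdeals

end GradedResolution

section Sparse

/-- The set `s` contains numbers `t_0 < ⋯ < t_{b-1}` with gaps at least `2` and `t_{b-1} + 2 ≤ L`.
The bound is stated so that `L` itself may be appended to the sequence. -/
def HasSparse (s : Set ℕ) (L b : ℕ) : Prop :=
  ∃ t : ℕ → ℕ, (∀ j < b, t j ∈ s ∧ t j + 2 ≤ L) ∧ ∀ i j, i < j → j < b → t i + 2 ≤ t j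

namespace HasSparse

variable {s : Set ℕ} {L b : ℕ}

@[simp]
theorem zero : HasSparse s L 0 := ⟨id, by simp, by simp⟩

theorem mono {s' : Set ℕ} (h : HasSparse s L b) (hs : ∀ n ∈ s, n + 2 ≤ L → n ∈ s') :
    HasSparse s' L b := by
  obtain ⟨t, ht, hgap⟩ := h
  exact ⟨t, fun j hj => ⟨hs _ (ht j hj).1 (ht j hj).2, (ht j hj).2⟩, hgap⟩

theorem mono_right {L' : ℕ} (h : HasSparse s L b) (hL : L ≤ L') : HasSparse s L' b := by
  obtain ⟨t, ht, hgap⟩ := h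
  exact ⟨t, fun j hj => ⟨(ht j hj).1, (ht j hj).2.trans hL⟩, hgap⟩

theorem succ_succ_iff :
    HasSparse s (L + 2) (b + 1) ↔ HasSparse s (L + 1) (b + 1) ∨ (L ∈ s ∧ HasSparse s L b) := by
  constructor
  · rintro ⟨t, ht, hgap⟩
    obtain h | h : t b = L ∨ t b < L := by grind
    · exact .inr ⟨h ▸ (ht b (by omega)).1, t, by grind, by grind⟩
    · refine .inl ⟨t, fun j hj => ⟨(ht j hj).1, ?_⟩, hgap⟩
      obtain hjb | rfl := Nat.lt_succ_iff_lt_or_eq.1 hj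
      · have := hgap j b hjb b.lt_succ_self
        omega
      · omega
  · rintro (h | ⟨hL, t, ht, hgap⟩)
    · exact h.mono_right (by omega)
    · exact ⟨fun j => if j < b then t j else L, by grind, by grind⟩

theorem append (hL : L ∈ s) (h : HasSparse s L b) : HasSparse s (L + 2) (b + 1) :=
  succ_succ_iff.2 (.inr ⟨hL, h⟩)

theorem init (h : HasSparse s (L + 1) (b + 1)) : HasSparse s L b := by
  obtain ⟨t, ht, hgap⟩ := h
  exact ⟨t, by grind, by grind⟩

theorem tail (h : HasSparse s (L + 1) (b + 1)) : HasSparse (Nat.succ ⁻¹' s) L b := by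
  obtain ⟨t, ht, hgap⟩ := h
  have hpos (j : ℕ) (hj : j < b) : (t (j + 1) - 1).succ = t (j + 1) := by
    have := hgap j (j + 1) (by omega) (by omega)
    omega
  refine ⟨fun j => t (j + 1) - 1, fun j hj => ⟨?_, ?_⟩, fun i j hij hj => ?_⟩
  · rw [Set.mem_preimage, hpos j hj]
    exact (ht (j + 1) (by omega)).1
  · have := (ht (j + 1) (by omega)).2
    grind
  · have := hgap (i + 1) (j + 1) (by omega) (by omega)
    grind

theorem of_shift (h : HasSparse (Nat.succ ⁻¹' s) L b) : HasSparse s (L + 1) b := by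
  obtain ⟨t, ht, hgap⟩ := h
  exact ⟨fun j => t j + 1, fun j hj => ⟨(ht j hj).1, by grind⟩, by grind⟩

theorem two_mul_le (h : HasSparse s L b) : 2 * b ≤ L := by
  induction b generalizing L with
  | zero => omega
  | succ b ih =>
    obtain ⟨t, ht, hgap⟩ := h
    have : 2 * b ≤ t b := ih ⟨t, by grind, by grind⟩
    grind

theorem two_mul_iff : HasSparse s (2 * b) b ↔ ∀ j < b, 2 * j ∈ s := by
  induction b with
  | zero => simp
  | succ b ih =>
    rw [mul_add_one, succ_succ_iff, ih, or_iff_right fun h => by have := h.two_mul_le; omega,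
      and_comm, Nat.forall_lt_succ_right]

theorem exchange (hb : 2 * b ≤ L) (h : HasSparse s (L + 1) b)
    (h' : HasSparse (Nat.succ ⁻¹' s) (L + 1) b) :
    HasSparse s (L + 2) (b + 1) ∨ HasSparse (Nat.succ ⁻¹' s) L b := by
  induction b generalizing L with
  | zero => simp
  | succ b ih =>
    obtain ⟨L, rfl⟩ : ∃ l, L = l + 2 := ⟨L - 2, by omega⟩
    obtain h'L | ⟨hmem, h'b⟩ := succ_succ_iff.1 h'
    · exact .inr h'L
    suffices HasSparse s (L + 2) (b + 1) ∨ HasSparse (Nat.succ ⁻¹' s) (L + 2) (b + 1) from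
      this.imp_left (append hmem)
    obtain hL | ⟨hmem', hb'⟩ := succ_succ_iff.1 h
    · exact .inl hL
    · exact (ih (by omega) hb' h'b).imp_right (append hmem')

end HasSparse

/-- The condition on index sets that cuts out `I_{b+1,1,N} + I_{b+1,2,N+1}` for `N > 2 * b`, with
indices shifted to start from `0`; for `N = 2 * b` it cuts out `(x_0 ⋯ x_{2b})`. It is stated as the
intersection that arises in the induction on `N`. -/
def IsCyclicNonface (s : Set ℕ) (b N : ℕ) : Prop :=
  HasSparse s (N + 2) (b + 1) ∧ HasSparse (Nat.succ ⁻¹' s) N b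

namespace IsCyclicNonface

variable {s : Set ℕ} {b N : ℕ}

theorem succ_iff (hb : 2 * b ≤ N) : IsCyclicNonface s b (N + 1) ↔
    HasSparse s (N + 2) (b + 1) ∨ (N + 1 ∈ s ∧ HasSparse (Nat.succ ⁻¹' s) N b) := by
  constructor
  · rintro ⟨h, h'⟩
    obtain h | ⟨hN, hb'⟩ := HasSparse.succ_succ_iff.1 h
    · exact .inl h
    · exact (HasSparse.exchange hb hb' h').imp_right (.intro hN)
  · rintro (h | ⟨hN, h⟩)
    · exact ⟨h.mono_right (by omega), h.tail⟩
    · exact ⟨.append hN h.of_shift, h.mono_right (by omega)⟩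

theorem succ_iff_or (hb : 2 * b ≤ N) : IsCyclicNonface s b (N + 1) ↔
    HasSparse s (N + 2) (b + 1) ∨ HasSparse (Nat.succ ⁻¹' s) (N + 2) (b + 1) := by
  rw [succ_iff hb, HasSparse.succ_succ_iff (s := Nat.succ ⁻¹' s)]
  constructor
  · exact Or.imp_right .inr
  · rintro (h | h | h)
    exacts [.inl h, .inl h.of_shift, .inr h]

theorem two_mul_iff : IsCyclicNonface s b (2 * b) ↔ ∀ j < 2 * b + 1, j ∈ s := by
  rw [IsCyclicNonface, ← mul_add_one, HasSparse.two_mul_iff, HasSparse.two_mul_iff]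
  constructor
  · rintro ⟨heven, hodd⟩ j hj
    obtain ⟨i, rfl | rfl⟩ := j.even_or_odd'
    exacts [heven i (by omega), hodd i (by omega)]
  · exact fun h => ⟨fun j hj => h _ (by omega), fun j hj => h _ (by omega)⟩

end IsCyclicNonface

end Sparse

section BettiNumbers

/-- The Betti numbers of the ideal generated by the products of `b` variables with pairwise
nonadjacent indices, out of `L - 1` variables. -/
def linearBetti (b L i : ℕ) : ℕ := (L - b).choose (b + i) * Nat.multichoose b i

/-- The summand of `cyclicBetti` that mirrors `linearBetti (b + 1)` in the self-dual resolution of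
the Stanley–Reisner ring. The first branch is the last free module, mirroring the module `R` that
resolves the quotient in degree `0`. -/
def dualBetti (b N i : ℕ) : ℕ :=
  if i + 2 * b = N then 1 else (N - b).choose i * (N - b - (i + 1)).choose b

/-- The Betti numbers of the monomial ideal defined by `IsCyclicNonface b N`. -/
def cyclicBetti (b N i : ℕ) : ℕ := linearBetti (b + 1) (N + 1) i + dualBetti b N i

theorem linearBetti_zero_left (L : ℕ) : linearBetti 0 L = Pi.single 0 1 := by
  funext i
  cases i <;> simp [linearBetti]

theorem linearBetti_eq_zero {b L : ℕ} (h : L < 2 * b) : linearBetti b L = 0 := by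
  funext i
  rw [linearBetti, Nat.choose_eq_zero_of_lt (by omega), zero_mul, Pi.zero_apply]

theorem linearBetti_succ_succ_zero (b L : ℕ) :
    linearBetti (b + 1) (L + 2) 0 = linearBetti (b + 1) (L + 1) 0 + linearBetti b L 0 := by
  obtain h | h := le_or_gt b L
  · simp [linearBetti, Nat.succ_sub h, Nat.choose_succ_succ, add_comm]
  · rw [linearBetti_eq_zero (by omega), linearBetti_eq_zero (by omega),
      linearBetti_eq_zero (by omega)]
    rfl

theorem linearBetti_succ_succ_succ (b L i : ℕ) :
    linearBetti (b + 1) (L + 2) (i + 1) =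
      linearBetti (b + 1) (L + 1) (i + 1) + linearBetti b L (i + 1) +
        linearBetti (b + 1) (L + 1) i := by
  obtain h | h := le_or_gt b L
  · rw [linearBetti, show L + 2 - (b + 1) = L - b + 1 by omega, ← add_assoc, Nat.choose_succ_succ',
      add_mul, Nat.multichoose_succ_succ, mul_add]
    simp only [linearBetti, Nat.add_sub_add_right, add_right_comm b 1, ← add_assoc,
      Nat.multichoose_succ_succ]
    ring
  · rw [linearBetti_eq_zero (by omega), linearBetti_eq_zero (by omega),
      linearBetti_eq_zero (by omega)]
    rfl

theorem choose_add_mul_multichoose (n b i : ℕ) :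
    n.choose (b + i) * Nat.multichoose (b + 1) i = n.choose i * (n - i).choose b := by
  rw [Nat.multichoose_eq, add_right_comm, Nat.add_sub_cancel, Nat.choose_mul (Nat.le_add_left i b),
    Nat.add_sub_cancel]

theorem dualBetti_succ_zero {b N : ℕ} (h : 2 * b ≤ N) :
    dualBetti b (N + 1) 0 = linearBetti b N 0 := by
  rw [dualBetti, if_neg (by omega), linearBetti]
  simp [Nat.sub_right_comm _ b]

theorem dualBetti_succ_succ {b N : ℕ} (h : 2 * b ≤ N) (i : ℕ) :
    dualBetti b (N + 1) (i + 1) =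
      linearBetti b N (i + 1) + linearBetti (b + 1) (N + 1) i + dualBetti b N i := by
  have hlinear : linearBetti b N (i + 1) + linearBetti (b + 1) (N + 1) i =
      (N - b).choose (i + 1) * (N - b - (i + 1)).choose b := by
    rw [← choose_add_mul_multichoose, Nat.multichoose_succ_succ, linearBetti, linearBetti,
      Nat.add_sub_add_right, add_right_comm b 1, ← add_assoc, mul_add]
  rw [hlinear, dualBetti, dualBetti]
  split_ifs with h₁ h₂ h₂
  · rw [show N - b = b + i by omega]
    obtain rfl | hb := b.eq_zero_or_pos
    · simp
    · rw [Nat.choose_eq_zero_of_lt (n := b + i - (i + 1)) (by omega), mul_zero]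
  · omega
  · omega
  · rw [Nat.succ_sub (by omega), Nat.choose_succ_succ', Nat.succ_eq_add_one,
      Nat.add_sub_add_right]
    ring

theorem cyclicBetti_two_mul (b : ℕ) : cyclicBetti b (2 * b) = Pi.single 0 1 := by
  funext i
  rw [cyclicBetti, linearBetti_eq_zero (by omega), dualBetti]
  obtain rfl | hi := i.eq_zero_or_pos
  · simp
  obtain rfl | hb := b.eq_zero_or_pos
  · simp [hi.ne', Nat.choose_eq_zero_of_lt hi]
  · rw [if_neg (by omega), Nat.choose_eq_zero_of_lt (k := b) (by omega)]
    simp [hi.ne']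

theorem cyclicBetti_succ_zero {b N : ℕ} (h : 2 * b ≤ N) :
    cyclicBetti b (N + 1) 0 = linearBetti (b + 1) (N + 2) 0 + linearBetti b N 0 := by
  rw [cyclicBetti, dualBetti_succ_zero h]

theorem cyclicBetti_succ_succ {b N : ℕ} (h : 2 * b ≤ N) (i : ℕ) :
    cyclicBetti b (N + 1) (i + 1) =
      linearBetti (b + 1) (N + 2) (i + 1) + linearBetti b N (i + 1) + cyclicBetti b N i := by
  simp only [cyclicBetti, dualBetti_succ_succ h, add_assoc]

theorem linearBetti_eq_eta {b m i : ℕ} (h : i + 2 * b + 1 < m) :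
    linearBetti (b + 1) m i = eta (2 * b + 1) (m + 1) (i + 1) := by
  rw [linearBetti, eta, if_pos (by omega), show (2 * b + 1) / 2 = b by omega,
    Nat.multichoose_eq, Nat.choose_symm_of_eq_add (show b + 1 + i - 1 = i + b by omega)]
  congr 2 <;> omega

theorem dualBetti_eq_eta {b m i : ℕ} (h : i + 2 * b + 1 < m) :
    dualBetti b (m - 1) i = eta (2 * b + 1) (m + 1) (m - 2 * b - (i + 1)) := by
  rw [dualBetti, if_neg (by omega), eta, if_pos (by omega), show (2 * b + 1) / 2 = b by omega,
    ← Nat.choose_symm (by omega)]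
  congr 2 <;> omega

theorem cyclicBetti_eq_eta {b m i : ℕ} (h : i + 2 * b + 1 < m) :
    cyclicBetti b (m - 1) i = eta (2 * b + 1) (m + 1) (i + 1) +
      eta (2 * b + 1) (m + 1) (m - 2 * b - (i + 1)) := by
  rw [cyclicBetti, Nat.sub_add_cancel (by omega), linearBetti_eq_eta h, dualBetti_eq_eta h]

theorem cyclicBetti_top {b N : ℕ} (h : 2 * b ≤ N) : cyclicBetti b N (N - 2 * b) = 1 := by
  rw [cyclicBetti, linearBetti, Nat.choose_eq_zero_of_lt (by omega), dualBetti, if_pos (by omega),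
    zero_mul]

theorem cyclicBetti_eq_zero {b N i : ℕ} (h : N < i + 2 * b) : cyclicBetti b N i = 0 := by
  rw [cyclicBetti, linearBetti, Nat.choose_eq_zero_of_lt (by omega), dualBetti,
    if_neg (by omega), zero_mul, zero_add]
  obtain rfl | hb := b.eq_zero_or_pos
  · rw [Nat.choose_eq_zero_of_lt (by omega), zero_mul]
  · rw [Nat.choose_eq_zero_of_lt (k := b) (by omega), mul_zero]

end BettiNumbers

namespace GradedResolution

section Exponents

variable {σ : Type u}

theorem sum_single_le_iff {ι : Type*} {s : Finset ι} {f : ι → σ} (hf : Set.InjOn f s)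
    {α : σ →₀ ℕ} : ∑ i ∈ s, Finsupp.single (f i) 1 ≤ α ↔ ∀ i ∈ s, α (f i) ≠ 0 := by
  classical
  have hsum (i : ι) (hi : i ∈ s) : (∑ j ∈ s, Finsupp.single (f j) 1) (f i) = 1 := by
    rw [Finsupp.finsetSum_apply, Finset.sum_eq_single_of_mem i hi, Finsupp.single_eq_same]
    exact fun j hj hji => Finsupp.single_eq_of_ne fun h => hji (hf hj hi h.symm)
  constructor
  · intro h i hi
    exact Nat.one_le_iff_ne_zero.1 (hsum i hi ▸ h (f i))
  · intro h y
    by_cases hy : ∃ i ∈ s, f i = y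
    · obtain ⟨i, hi, rfl⟩ := hy
      exact (hsum i hi).trans_le (Nat.one_le_iff_ne_zero.2 (h i hi))
    · push Not at hy
      rw [Finsupp.finsetSum_apply, Finset.sum_eq_zero fun i hi =>
        Finsupp.single_eq_of_ne' (hy i hi)]
      exact zero_le

/-- The exponents of the monomials divisible by a product of `b` among the variables
`x 0, …, x (L - 2)` with pairwise nonadjacent indices. -/
def sparseExponents (x : ℕ → σ) (L b : ℕ) : Set (σ →₀ ℕ) :=
  {α | HasSparse {n | α (x n) ≠ 0} L b}

/-- The exponents of the monomials in the variables `x 0, …, x N` whose index sets satisfy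
`IsCyclicNonface`. -/
def cyclicNonfaceExponents (x : ℕ → σ) (b N : ℕ) : Set (σ →₀ ℕ) :=
  {α | IsCyclicNonface {n | α (x n) ≠ 0} b N}

theorem isUpperSet_sparseExponents (x : ℕ → σ) (L b : ℕ) :
    IsUpperSet (sparseExponents x L b) :=
  fun _ _ hαβ h => h.mono fun n hn _ => (Nat.pos_of_ne_zero hn |>.trans_le (hαβ (x n))).ne'

theorem isUpperSet_cyclicNonfaceExponents (x : ℕ → σ) (b N : ℕ) :
    IsUpperSet (cyclicNonfaceExponents x b N) :=
  (isUpperSet_sparseExponents x (N + 2) (b + 1)).inter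
    (isUpperSet_sparseExponents (x ∘ Nat.succ) N b)

theorem isFreeOf_sparseExponents {x : ℕ → σ} {L b l : ℕ} (h : ∀ n, n + 2 ≤ L → x n ≠ x l) :
    IsFreeOf (sparseExponents x L b) (x l) :=
  fun α hα => HasSparse.mono hα fun n hn hnL => by
    simpa [Finsupp.single_apply, (h n hnL).symm] using hn

theorem sparseExponents_union {x : ℕ → σ} (L b : ℕ) :
    sparseExponents x (L + 1) (b + 1) ∪ {α | α (x L) ≠ 0 ∧ α ∈ sparseExponents x L b} =
      sparseExponents x (L + 2) (b + 1) :=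
  Set.ext fun _ => HasSparse.succ_succ_iff.symm

theorem cyclicNonfaceExponents_union {x : ℕ → σ} {b N : ℕ} (h : 2 * b ≤ N) :
    sparseExponents x (N + 2) (b + 1) ∪
        {α | α (x (N + 1)) ≠ 0 ∧ α ∈ sparseExponents (x ∘ Nat.succ) N b} =
      cyclicNonfaceExponents x b (N + 1) :=
  Set.ext fun _ => (IsCyclicNonface.succ_iff h).symm

theorem sparseExponents_union_shift {x : ℕ → σ} {b N : ℕ} (h : 2 * b ≤ N) :
    sparseExponents x (N + 2) (b + 1) ∪ sparseExponents (x ∘ Nat.succ) (N + 2) (b + 1) =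
      cyclicNonfaceExponents x b (N + 1) :=
  Set.ext fun _ => (IsCyclicNonface.succ_iff_or h).symm

theorem cyclicNonfaceExponents_two_mul {x : ℕ → σ} {b : ℕ}
    (hx : Set.InjOn x (Set.Iio (2 * b + 1))) : cyclicNonfaceExponents x b (2 * b) =
      Set.Ici (∑ j ∈ Finset.range (2 * b + 1), Finsupp.single (x j) 1) := by
  ext α
  rw [Set.mem_Ici, sum_single_le_iff (by rwa [Finset.coe_range])]
  exact IsCyclicNonface.two_mul_iff.trans (by simp)

variable {k : Type u} [CommRing k]

theorem hasMonomialResolution_sparseExponents {x : ℕ → σ} {L : ℕ} (b : ℕ)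
    (hx : Set.InjOn x (Set.Iio (L - 1))) :
    HasMonomialResolution k (fun j => {b + j}) (linearBetti b L) (sparseExponents x L b) := by
  obtain h | h := lt_or_ge L (2 * b)
  · rw [linearBetti_eq_zero h, show sparseExponents x L b = ∅ from
      Set.eq_empty_of_forall_notMem fun α hα => h.not_ge (HasSparse.two_mul_le hα)]
    exact .empty
  match b, L with
  | 0, L =>
    rw [linearBetti_zero_left, show sparseExponents x L 0 = Set.Ici 0 from
      Set.ext fun α => iff_of_true HasSparse.zero (zero_le (a := α))]
    simpa using HasMonomialResolution.Ici (k := k) (0 : σ →₀ ℕ)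
  | b + 1, L + 2 =>
    have hxL (n : ℕ) (hn : n + 2 ≤ L + 1) : x n ≠ x L := fun h => by
      have := hx (by simp; omega) (by simp) h
      omega
    have hU := hasMonomialResolution_sparseExponents (L := L + 1) (b + 1)
      (hx.mono (Set.Iio_subset_Iio (by omega)))
    have hV := hasMonomialResolution_sparseExponents (L := L) b
      (hx.mono (Set.Iio_subset_Iio (by omega)))
    have hUV : sparseExponents x (L + 1) (b + 1) ∩ sparseExponents x L b =
        sparseExponents x (L + 1) (b + 1) :=
      Set.inter_eq_left.2 fun _ => HasSparse.init
    rw [← sparseExponents_union]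
    refine hU.union_X_mul hV (hUV ▸ hU) (isFreeOf_sparseExponents hxL)
      (isFreeOf_sparseExponents fun n hn => hxL n (by omega)) ?_ (fun _ => rfl)
      (linearBetti_succ_succ_zero b L) (linearBetti_succ_succ_succ b L)
    rintro j _ rfl
    exact ⟨le_rfl, by simp [add_assoc]⟩

theorem hasMonomialResolution_cyclicNonfaceExponents {x : ℕ → σ} {b N : ℕ} (hN : 2 * b ≤ N)
    (hx : Set.InjOn x (Set.Iio (N + 1))) :
    HasMonomialResolution k (fun j => Set.Ici (b + 1 + j)) (cyclicBetti b N)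
      (cyclicNonfaceExponents x b N) := by
  induction N, hN using Nat.le_induction with
  | base =>
    rw [cyclicBetti_two_mul, cyclicNonfaceExponents_two_mul hx]
    refine (HasMonomialResolution.Ici _).weaken fun j => Set.singleton_subset_iff.2 ?_
    simp
    omega
  | succ N hN ih =>
    have hxN (n : ℕ) (hn : n < N + 1) : x n ≠ x (N + 1) := fun h => by
      have := hx (by simp; omega) (by simp) h
      omega
    have hU := hasMonomialResolution_sparseExponents (k := k) (L := N + 2) (b + 1)
      (hx.mono (Set.Iio_subset_Iio (by omega)))
    have hV := hasMonomialResolution_sparseExponents (k := k) (x := x ∘ Nat.succ) (L := N) b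
      (hx.comp Nat.succ_injective.injOn fun n hn => by simp at hn ⊢; omega)
    rw [← cyclicNonfaceExponents_union hN]
    refine hU.union_X_mul hV (ih (hx.mono (Set.Iio_subset_Iio (by omega))))
      (isFreeOf_sparseExponents fun n hn => hxN n (by omega))
      (isFreeOf_sparseExponents (x := x ∘ Nat.succ) (l := N) fun n hn => hxN _ (by simp; omega))
      ?_ (fun _ => Set.self_mem_Ici) (cyclicBetti_succ_zero hN) (cyclicBetti_succ_succ hN)
    intro j d hd
    simp only [Set.mem_Ici] at hd ⊢
    omega

end Exponents

end GradedResolution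

open GradedResolution

section Statement

theorem add_two_le_of_lt {t : ℕ → ℕ} {b : ℕ} (ht : ∀ j, j + 1 < b → t j + 2 ≤ t (j + 1)) {i j : ℕ}
    (hij : i < j) (hj : j < b) : t i + 2 ≤ t j := by
  induction j, hij using Nat.le_induction with
  | base => exact ht i hj
  | succ j _ ih => exact (ih (by omega)).trans (by have := ht j hj; omega)

theorem mem_Icc_of_add_two_le {t : ℕ → ℕ} {a p q : ℕ} (hp : p ≤ t 0) (hq : t (a - 1) ≤ q)
    (ht : ∀ j, j + 1 < a → t j + 2 ≤ t (j + 1)) {j : ℕ} (hj : j < a) : t j ∈ Set.Icc p q := by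
  constructor
  · obtain rfl | h := j.eq_zero_or_pos
    · exact hp
    · have := add_two_le_of_lt ht h hj
      omega
  · obtain rfl | h := (Nat.le_sub_one_of_lt hj).eq_or_lt
    · exact hq
    · have := add_two_le_of_lt ht h (by omega)
      omega

variable {n : ℕ} [NeZero n]

theorem injOn_ofNat : Set.InjOn (Fin.ofNat n) (Set.Iio n) := fun i hi j hj h => by
  simpa [Fin.ext_iff, Nat.mod_eq_of_lt hi, Nat.mod_eq_of_lt hj] using h

theorem sum_single_ofNat_le_iff {t : ℕ → ℕ} {a : ℕ} (ht : ∀ j < a, t j ∈ Set.Icc 1 n)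
    (hgap : ∀ j, j + 1 < a → t j + 2 ≤ t (j + 1)) {α : Fin n →₀ ℕ} :
    ∑ j ∈ Finset.range a, Finsupp.single (Fin.ofNat n (t j - 1)) 1 ≤ α ↔
      ∀ j < a, α (Fin.ofNat n (t j - 1)) ≠ 0 := by
  have hinj : Set.InjOn (fun j => t j - 1) (Set.Iio a) := StrictMonoOn.injOn fun i hi j hj hij => by
    have := add_two_le_of_lt hgap hij hj
    have := (ht i hi).1
    grind
  rw [sum_single_le_iff]
  · simp
  · rw [Finset.coe_range]
    exact injOn_ofNat.comp hinj fun j hj => by have := ht j hj; grind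

variable (k : Type) [Field k]

theorem prod_Xv_eq_monomial {t : ℕ → ℕ} {a : ℕ} (ht : ∀ j < a, t j ∈ Set.Icc 1 n) :
    ∏ j ∈ Finset.range a, Xv k n (t j) =
      monomial (∑ j ∈ Finset.range a, Finsupp.single (Fin.ofNat n (t j - 1)) 1) 1 := by
  rw [monomial_sum_one]
  refine Finset.prod_congr rfl fun j hj => ?_
  have htj := ht j (Finset.mem_range.1 hj)
  rw [Xv, dif_pos ⟨htj.1, htj.2⟩, X]
  congr
  exact (Nat.mod_eq_of_lt (by grind)).symm

theorem idealI_eq_span_monomial {a p q : ℕ} (hp : 1 ≤ p) (hq : q ≤ n) :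
    idealI k n a p q = Ideal.span ((monomial · (1 : k)) '' {α | ∃ t : ℕ → ℕ, p ≤ t 0 ∧
      t (a - 1) ≤ q ∧ (∀ j, j + 1 < a → t j + 2 ≤ t (j + 1)) ∧
      α = ∑ j ∈ Finset.range a, Finsupp.single (Fin.ofNat n (t j - 1)) 1}) := by
  have hprod {t : ℕ → ℕ} (h₀ : p ≤ t 0) (h₁ : t (a - 1) ≤ q)
      (ht : ∀ j, j + 1 < a → t j + 2 ≤ t (j + 1)) := prod_Xv_eq_monomial k fun j hj =>
    Set.Icc_subset_Icc hp hq (mem_Icc_of_add_two_le h₀ h₁ ht hj)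
  rw [idealI]
  congr 1
  ext f
  constructor
  · rintro ⟨t, h₀, h₁, ht, rfl⟩
    exact ⟨_, ⟨t, h₀, h₁, ht, rfl⟩, (hprod h₀ h₁ ht).symm⟩
  · rintro ⟨_, ⟨t, h₀, h₁, ht, rfl⟩, rfl⟩
    exact ⟨t, h₀, h₁, ht, (hprod h₀ h₁ ht).symm⟩

theorem idealI_eq_restrictSupportIdeal {a c L : ℕ} (ha : 0 < a) (hL : c + L ≤ n + 1) :
    idealI k n a (c + 1) (c + L - 1) =
      restrictSupportIdeal k (sparseExponents (fun j => Fin.ofNat n (j + c)) L a)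
        (isUpperSet_sparseExponents _ L a) := by
  ext f
  rw [idealI_eq_span_monomial k (by omega) (by omega), mem_ideal_span_monomial_image,
    mem_restrictSupportIdeal]
  refine forall₂_congr fun α _ => ⟨?_, ?_⟩
  · rintro ⟨_, ⟨t, h₀, h₁, ht, rfl⟩, hα⟩
    have hmem {j : ℕ} (hj : j < a) := mem_Icc_of_add_two_le h₀ h₁ ht hj
    rw [sum_single_ofNat_le_iff (fun j hj => by have := hmem hj; grind) ht] at hα
    refine ⟨fun j => t j - 1 - c, fun j hj => ⟨?_, by grind⟩, fun i j hij hj => ?_⟩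
    · have := hα j hj
      rwa [← Nat.sub_add_cancel (show c ≤ t j - 1 by grind)] at this
    · have := add_two_le_of_lt ht hij hj
      grind
  · rintro ⟨t, ht, hgap⟩
    have hmem (j : ℕ) (hj : j < a) : t j + c + 1 ∈ Set.Icc (c + 1) (c + L - 1) := by grind
    have hgap' (j : ℕ) (hj : j + 1 < a) : t j + c + 1 + 2 ≤ t (j + 1) + c + 1 := by
      have := hgap j (j + 1) (by omega) hj
      omega
    refine ⟨_, ⟨fun j => t j + c + 1, (hmem 0 ha).1, (hmem (a - 1) (by omega)).2, hgap', rfl⟩, ?_⟩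
    rw [sum_single_ofNat_le_iff (fun j hj => by have := hmem j hj; grind) hgap']
    exact fun j hj => (ht j hj).1

end Statement

section Main

attribute [local instance] MvPolynomial.gradedAlgebra

variable {k : Type} [Field k]

theorem betti_quotient_restrictSupportIdeal {n : ℕ} {D : ℕ → Set ℕ} {β : ℕ → ℕ}
    {U : Set (Fin n →₀ ℕ)} (hU : IsUpperSet U) (h₀ : 0 ∉ U) (h : HasMonomialResolution k D β U)
    (i : ℕ) :
    betti k n (ModuleCat.of _ (MvPolynomial (Fin n) k ⧸ restrictSupportIdeal k U hU)) i =
      (Nat.casesOn i 1 β : ℕ) := by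
  obtain ⟨_, _, h⟩ := h
  have hle : restrictSupportIdeal k U hU ≤ maxIdl k n := fun p hp =>
    mem_maxIdl_iff.2 (notMem_support_iff.1 fun h => h₀ (hp h))
  obtain ⟨P⟩ := MinimalFreeResolution.quotient (β := fun i => Nat.casesOn i 1 β) hle rfl
    (h.nonempty_minimalFreeResolution (irrelevant_le_maxIdl k n))
  exact P.betti_eq i

theorem idealI_add_idealI {b N : ℕ} (h : 2 * b ≤ N) :
    idealI k (N + 2) (b + 1) 1 (N + 1) + idealI k (N + 2) (b + 1) 2 (N + 2) =
      restrictSupportIdeal k (cyclicNonfaceExponents (Fin.ofNat (N + 2)) b (N + 1))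
        (isUpperSet_cyclicNonfaceExponents _ b (N + 1)) := by
  have h₁ := idealI_eq_restrictSupportIdeal k (n := N + 2) (c := 0) (L := N + 2) b.succ_pos
    (by omega)
  have h₂ := idealI_eq_restrictSupportIdeal k (n := N + 2) (c := 1) (L := N + 2) b.succ_pos
    (by omega)
  rw [Nat.zero_add, Nat.zero_add, Nat.add_succ_sub_one] at h₁
  rw [Nat.add_sub_cancel_left] at h₂
  rw [h₁, h₂, Submodule.add_eq_sup, restrictSupportIdeal_sup]
  simp only [← sparseExponents_union_shift h]
  rfl

theorem betti_quotient_idealI_add_idealI {b m : ℕ} (hm : 2 * b + 1 < m) (i : ℕ) :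
    betti k m (ModuleCat.of _
      (MvPolynomial (Fin m) k ⧸ (idealI k m (b + 1) 1 (m - 1) + idealI k m (b + 1) 2 m))) i =
      (Nat.casesOn i 1 (cyclicBetti b (m - 1)) : ℕ) := by
  obtain ⟨N, rfl⟩ : ∃ N, m = N + 2 := ⟨m - 2, by omega⟩
  have hx : Set.InjOn (Fin.ofNat (N + 2)) (Set.Iio (N + 1 + 1)) := injOn_ofNat
  rw [Nat.add_succ_sub_one, idealI_add_idealI (by omega)]
  refine betti_quotient_restrictSupportIdeal _ (fun h => ?_)
    (hasMonomialResolution_cyclicNonfaceExponents (by omega) hx) i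
  obtain ⟨t, ht, -⟩ := h.1
  exact (ht 0 b.succ_pos).1 rfl

end Main

/-- Betti numbers of `k[Δ(d,m)]` for `d ≥ 2` even, `d + 1 < m`, `a = (d+2)/2` (Schenzel):
for `M = k[x_1,…,x_m]/(I_{a,1,m−1} + I_{a,2,m})` one has `b_0(M) = 1`, `b_{m−d}(M) = 1`,
`b_i(M) = 0` for `i > m−d`, and `b_i(M) = η(d+1, m+1, i) + η(d+1, m+1, m−d−i)` for
`1 ≤ i ≤ m−d−1`. -/
theorem betti_cyclic_even (k : Type) [Field k] (d m : ℕ)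
    (hd : Even d) (hd2 : 2 ≤ d) (hm : d + 1 < m) (a : ℕ) (ha : a = (d + 2) / 2)
    (M : ModuleCat (MvPolynomial (Fin m) k))
    (hM : M = ModuleCat.of (MvPolynomial (Fin m) k)
      (MvPolynomial (Fin m) k ⧸ (idealI k m a 1 (m - 1) + idealI k m a 2 m))) :
    betti k m M 0 = 1 ∧
    betti k m M (m - d) = 1 ∧
    (∀ i, m - d < i → betti k m M i = 0) ∧
    (∀ i, 1 ≤ i → i ≤ m - d - 1 →
      betti k m M i = ((eta (d + 1) (m + 1) i + eta (d + 1) (m + 1) (m - d - i) : ℕ) :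
        Cardinal)) := by
  obtain ⟨b, rfl⟩ := hd.two_dvd
  obtain rfl : a = b + 1 := by omega
  subst hM
  simp only [betti_quotient_idealI_add_idealI hm]
  refine ⟨Nat.cast_one, ?_, fun i hi => ?_, fun i hi hi' => ?_⟩
  · rw [show m - 2 * b = m - 1 - 2 * b + 1 by omega]
    exact Nat.cast_eq_one.2 (cyclicBetti_top (by omega))
  · obtain ⟨i, rfl⟩ := Nat.exists_eq_add_of_lt (Nat.zero_lt_of_lt hi)
    exact Nat.cast_eq_zero.2 (cyclicBetti_eq_zero (by omega))
  · obtain ⟨i, rfl⟩ := Nat.exists_eq_add_of_le' hi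
    exact congrArg Nat.cast (cyclicBetti_eq_eta (by omega))
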